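/- arXiv:1804.09684 — 2 statements merged into one kernel-verified Lean document; each statement's English description precedes it below -/
import Mathlib

section
/- Let d ≥ 2 and c ≥ 1 be fixed integers and C > 0 a fixed constant. There exist constants r and K, depending only on d, c and C, such that the following holds for every integer b ≥ 1, every finite alphabet Σ, and every key set X ⊆ Σ^c with g = 2^b, n = d·g ≥ 4 and |X| = m ≤ C·n. If h_1,…,h_d : Σ^c → F₂^b ≅ [g] are d independent random simple tabulation hash functions, then the probability (over the random tables) that the hash graph contains a copy of the d-nomial tree B_{d,k} with k = ⌈log₂ log₂ n / log₂ d + r⌉ is at most K / log₂ log₂ n. -/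
/-! The hash of a key is a linear image of its incidence vector `keyVec x` over `F₂`, so keys with
linearly independent vectors are hashed independently and uniformly. The probability is bounded by
a first moment argument on a subtree of `B_{d,k}`, combined with a count of linear dependencies
between keys.

*The tree.* Inside a copy of `B_{d,K}` with `K = D + s + 2` lies a tree with `N + 1 = d ^ D + 1` inner
nodes, where every non-root node carries `s` leaf edges and the root carries `K - 1` of them
(`exists_config`). Every realization of this tree comes with all permutations of its leaves, so the
union bound gains a factor `s!` per node (`card_exists_compat`). A tree with independent key vectors
and `E` edges satisfies `E - 1` collision constraints of probability `2 ^ (-b)` each, so all but one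
of the `E` factors `|X|` from the choice of keys cancel (`card_independent_copies`). For a suitable
constant `s` each node contributes a factor at most `1 / 2`, and since `2 ^ N ≥ n` the remaining
factor `|X| = O(n)` cancels as well.

*Dependencies.* The keys of the tree are added one at a time. At the first failure of independence the
keys present are independent and their span contains another key of `X` (`Config.dichotomy`). Such
families are rarer by a factor `O(1 / |X|)` (`card_dependent`, resting on the bound
`card_four_tuples` for quadruples of keys with prescribed sum), which again removes the last factor
`|X|`, and the bounds for the possible stopping points form a geometric series.

*The root.* All these bounds share the factor `β ^ q / q!` coming from `q` leaves at the root. Among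
`K - 1` leaf edges one can choose `q = ⌊log₂ (K - 1)⌋` that are independent together with the root key
(`Config.select`), and `β ^ q / q! ≤ exp (2 β) * 2 ^ (-q) = O(1 / K) = O(1 / log₂ log₂ n)`. -/

/-- Simple tabulation: the hash of `x` is the XOR (sum over `F₂`) of the table entries
`T i (x i)`. -/
def simpleTab {c b : ℕ} {A : Type*} (T : Fin c → A → (Fin b → ZMod 2)) (x : Fin c → A) :
    Fin b → ZMod 2 := ∑ i, T i (x i)

/-- The edge set of the `d`-nomial tree `B_{d,k}`.  Vertices are encoded as strings in
`Fin k → Fin d`; the root is the constant-`0` string, and the copy of `B_{d,k-1}` rooted at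
the `i`-th vertex of the top edge consists of the strings starting with `i`. -/
def BEdges (d : ℕ) [NeZero d] : (k : ℕ) → Finset (Finset (Fin k → Fin d))
  | 0 => ∅
  | (k + 1) =>
      insert (Finset.univ.image fun i : Fin d => Fin.cons i fun _ => (0 : Fin d))
        (Finset.univ.biUnion fun i : Fin d =>
          (BEdges d k).image fun e => e.image (Fin.cons i))

/-- The hash graph (given by the edge map `hashEdge` on the key set `X`) contains a copy of
the hypertree with edge set `Edges`: there are distinct keys of `X`, one per edge, and an
injection of the vertex set into the bins mapping each tree edge onto the hash edge of the
corresponding key. -/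
def containsCopy {Vt A G : Type*} [DecidableEq Vt] [DecidableEq G]
    (Edges : Finset (Finset Vt)) (X : Finset A) (hashEdge : A → Finset G) : Prop :=
  ∃ (φ : Vt → G) (ψ : Finset Vt → A),
    Set.InjOn φ ↑(Edges.biUnion id) ∧ Set.InjOn ψ ↑Edges ∧
      ∀ e ∈ Edges, ψ e ∈ X ∧ e.image φ = hashEdge (ψ e)

set_option linter.unusedSectionVars false

/-- The incidence vector over `F₂` of the position characters `(i, x i)` of a key. A simple
tabulation hash function is exactly a linear map evaluated at this vector. -/
def keyVec {c : ℕ} {A : Type*} [DecidableEq A] (x : Fin c → A) : Fin c → A → ZMod 2 :=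
  fun i => Pi.single (x i) 1

/-! ### Four-tuples of keys with a prescribed sum -/

section FourTuples

variable {c : ℕ} {A : Type*} [Fintype A] [DecidableEq A]

/-- The type of an ordered pair of keys: the pair of characters at each position where the keys
differ, and `none` where they agree. It determines the sum of the two key vectors. -/
def pairType (t : (Fin c → A) × (Fin c → A)) : Fin c → Option (A × A) :=
  fun i => if t.1 i = t.2 i then none else some (t.1 i, t.2 i)

/-- The sum of the key vectors of any pair of the given type. -/
def typeSum (k : Fin c → Option (A × A)) : Fin c → A → ZMod 2 :=
  fun i => (k i).elim 0 fun t => Pi.single t.1 1 + Pi.single t.2 1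

lemma typeSum_pairType (t : (Fin c → A) × (Fin c → A)) :
    typeSum (pairType t) = keyVec t.1 + keyVec t.2 := by
  funext i
  by_cases h : t.1 i = t.2 i
  · simp only [typeSum, pairType, h, if_true, Option.elim, Pi.add_apply, keyVec]
    funext a; exact (CharTwo.add_self_eq_zero _).symm
  · simp [typeSum, pairType, h, keyVec]

lemma single_add_single_cases {a b a' b' : A} (hab : a ≠ b)
    (h : (Pi.single a 1 + Pi.single b 1 : A → ZMod 2) = Pi.single a' 1 + Pi.single b' 1) :
    (a = a' ∧ b = b') ∨ (a = b' ∧ b = a') := by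
  have h1 := congrFun h a
  have h2 := congrFun h b
  simp only [Pi.add_apply, Pi.single_apply] at h1 h2
  by_cases e1 : a = a' <;> by_cases e2 : a = b' <;> by_cases e3 : b = a' <;>
    by_cases e4 : b = b' <;> simp_all [eq_comm]

lemma single_add_single_ne_zero {a b : A} (hab : a ≠ b) :
    (Pi.single a 1 + Pi.single b 1 : A → ZMod 2) ≠ 0 := by
  intro h
  have h1 := congrFun h a
  simp [hab] at h1

/-- A vector determines the type of a pair up to the order of the two characters at each
position, so at most `2 ^ c` types share a given sum. -/
lemma card_typeSum_fiber (P : Finset ((Fin c → A) × (Fin c → A))) (w : Fin c → A → ZMod 2) :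
    ((P.image pairType).filter fun k => typeSum k = w).card ≤ 2 ^ c := by
  rcases Finset.eq_empty_or_nonempty ((P.image pairType).filter fun k => typeSum k = w) with h | h
  · rw [h]; simp
  obtain ⟨k₀, hk₀⟩ := h
  have hc : (Finset.univ : Finset (Fin c → Bool)).card = 2 ^ c := by simp
  rw [← hc]
  refine Finset.card_le_card_of_injOn (fun k i => decide (k i = k₀ i)) (by simp) ?_
  have key : ∀ k ∈ (P.image pairType).filter (fun k => typeSum k = w), ∀ i,
      k i = k₀ i ∨ ∃ t, k₀ i = some t ∧ k i = some (t.2, t.1) := by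
    intro k hk i
    simp only [Finset.mem_filter, Finset.mem_image] at hk hk₀
    obtain ⟨⟨t, -, rfl⟩, hk⟩ := hk
    obtain ⟨⟨t₀, -, rfl⟩, hk₀⟩ := hk₀
    have h := congrFun (hk.trans hk₀.symm) i
    by_cases h1 : t.1 i = t.2 i <;> by_cases h2 : t₀.1 i = t₀.2 i
    · left; simp [pairType, h1, h2]
    · exfalso
      simp only [typeSum, pairType, h1, h2, if_true, if_false, Option.elim] at h
      exact single_add_single_ne_zero h2 h.symm
    · exfalso
      simp only [typeSum, pairType, h1, h2, if_true, if_false, Option.elim] at h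
      exact single_add_single_ne_zero h1 h
    · simp only [typeSum, pairType, h1, h2, if_false, Option.elim] at h ⊢
      rcases single_add_single_cases h1 h with ⟨e1, e2⟩ | ⟨e1, e2⟩
      · left; rw [e1, e2]
      · right; exact ⟨_, rfl, by rw [e1, e2]⟩
  intro k hk k' hk' hkk
  funext i
  have hi := congrFun hkk i
  simp only [decide_eq_decide] at hi
  rcases key k hk i with h | ⟨t, h, ht⟩ <;> rcases key k' hk' i with h' | ⟨t', h', ht'⟩
  · rw [h, h']
  · rw [h, (hi.1 h)]
  · rw [h', (hi.2 h')]
  · rw [ht, ht']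
    rw [h] at h'
    cases h'
    rfl

/-- Two pairs of equal type are determined by the first key of the one, the second key of the
other and the set of positions where the type is `none`: at a position with `some (u, v)` the
unknown characters are `v` and `u`, and at the others the two keys of a pair agree. -/
lemma card_same_pairType (X : Finset (Fin c → A)) :
    (((X ×ˢ X) ×ˢ (X ×ˢ X)).filter fun t => pairType t.1 = pairType t.2).card
      ≤ 2 ^ c * X.card ^ 2 := by
  have hc : ((X ×ˢ X) ×ˢ (Finset.univ : Finset (Fin c → Bool))).card = 2 ^ c * X.card ^ 2 := by
    simp [Finset.card_product]; ring
  rw [← hc]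
  refine Finset.card_le_card_of_injOn
    (fun t => ((t.1.1, t.2.2), fun i => decide (t.1.1 i = t.1.2 i))) ?_ ?_
  · intro t ht
    simp only [Finset.coe_filter, Finset.mem_product, Set.mem_ofPred_eq] at ht
    simp [ht.1.1.1, ht.1.2.2]
  · rintro ⟨⟨x1, x2⟩, ⟨x3, x4⟩⟩ ht ⟨⟨y1, y2⟩, ⟨y3, y4⟩⟩ ht' h
    simp only [Finset.coe_filter, Finset.mem_product, Set.mem_ofPred_eq] at ht ht'
    simp only [Prod.mk.injEq] at h
    obtain ⟨⟨rfl, rfl⟩, h⟩ := h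
    have h2 := ht.2
    have h2' := ht'.2
    have e : ∀ i, x2 i = y2 i ∧ x3 i = y3 i := by
      intro i
      have a := congrFun h i
      have a1 := congrFun h2 i
      have a2 := congrFun h2' i
      simp only [decide_eq_decide] at a
      simp only [pairType] at a1 a2
      by_cases b1 : x1 i = x2 i <;> by_cases b2 : x3 i = x4 i <;>
        by_cases b3 : x1 i = y2 i <;> by_cases b4 : y3 i = x4 i <;> simp_all
    have e1 : x2 = y2 := funext fun i => (e i).1
    have e2 : x3 = y3 := funext fun i => (e i).2
    rw [e1, e2]

/-- At most `4 ^ c * |X| ^ 2` quadruples of keys have a prescribed sum of key vectors. With `R k`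
the number of pairs of type `k`, the count is a sum of products `R k * R k'` over compatible types;
`R k * R k' ≤ (R k ^ 2 + R k' ^ 2) / 2`, each type is compatible with at most `2 ^ c` others, and
`∑ R k ^ 2` is bounded by `card_same_pairType`. -/
lemma card_four_tuples (X : Finset (Fin c → A)) (v : Fin c → A → ZMod 2) :
    (((X ×ˢ X) ×ˢ (X ×ˢ X)).filter fun t =>
      keyVec t.1.1 + keyVec t.1.2 + (keyVec t.2.1 + keyVec t.2.2) = v).card
      ≤ 4 ^ c * X.card ^ 2 := by
  set P := X ×ˢ X with hP
  set I := P.image pairType with hI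
  set R : (Fin c → Option (A × A)) → ℕ := fun k => (P.filter fun t => pairType t = k).card with hR
  -- the number of pairs `(t, t')` whose types satisfy a relation
  have count : ∀ rel : (Fin c → Option (A × A)) → (Fin c → Option (A × A)) → Prop,
      ∀ _ : DecidableRel rel,
      ((P ×ˢ P).filter fun t => rel (pairType t.1) (pairType t.2)).card =
        ∑ k ∈ I, ∑ k' ∈ I, if rel k k' then R k * R k' else 0 := by
    intro rel _
    rw [Finset.card_eq_sum_card_fiberwise (f := fun t => (pairType t.1, pairType t.2))
      (t := I ×ˢ I), Finset.sum_product]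
    · refine Finset.sum_congr rfl fun k _ => Finset.sum_congr rfl fun k' _ => ?_
      split_ifs with h
      · rw [hR, ← Finset.card_product]
        congr 1
        ext ⟨t, t'⟩
        simp only [Finset.mem_filter, Finset.mem_product, Prod.mk.injEq]
        constructor
        · rintro ⟨⟨⟨a, b⟩, -⟩, e, f⟩; exact ⟨⟨a, e⟩, b, f⟩
        · rintro ⟨⟨a, e⟩, b, f⟩; exact ⟨⟨⟨a, b⟩, by rw [e, f]; exact h⟩, e, f⟩
      · rw [Finset.card_eq_zero, Finset.filter_eq_empty_iff]
        rintro ⟨t, t'⟩ ht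
        simp only [Finset.mem_filter, Prod.mk.injEq] at ht ⊢
        rintro ⟨rfl, rfl⟩
        exact h ht.2
    · intro t ht
      simp only [Finset.coe_filter, Finset.mem_product, Set.mem_ofPred_eq] at ht
      simp only [Finset.coe_product, Set.mem_prod, Finset.mem_coe]
      exact ⟨Finset.mem_image_of_mem _ ht.1.1, Finset.mem_image_of_mem _ ht.1.2⟩
  have h1 := count (fun k k' => typeSum k + typeSum k' = v) inferInstance
  have h2 := count (fun k k' => k = k') inferInstance
  simp only [typeSum_pairType] at h1
  rw [h1]
  have h3 := card_same_pairType X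
  rw [h2] at h3
  have h4 : ∑ k ∈ I, R k ^ 2 ≤ 2 ^ c * X.card ^ 2 := by
    refine le_trans (le_of_eq ?_) h3
    refine Finset.sum_congr rfl fun k hk => ?_
    rw [Finset.sum_ite_eq, if_pos hk, sq]
  have fib : ∀ k ∈ I, (I.filter fun k' => typeSum k + typeSum k' = v).card ≤ 2 ^ c := by
    intro k _
    refine le_trans (Finset.card_le_card ?_) (card_typeSum_fiber P (v - typeSum k))
    intro k' hk'
    simp only [Finset.mem_filter] at hk' ⊢
    exact ⟨hk'.1, eq_sub_of_add_eq' hk'.2⟩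
  have h5 : ∑ k ∈ I, ∑ k' ∈ I, (if typeSum k + typeSum k' = v then R k ^ 2 else 0)
      ≤ 2 ^ c * ∑ k ∈ I, R k ^ 2 := by
    rw [Finset.mul_sum]
    refine Finset.sum_le_sum fun k hk => ?_
    rw [← Finset.sum_filter, Finset.sum_const, smul_eq_mul]
    exact Nat.mul_le_mul_right _ (fib k hk)
  have h6 : ∑ k ∈ I, ∑ k' ∈ I, (if typeSum k + typeSum k' = v then R k' ^ 2 else 0)
      ≤ 2 ^ c * ∑ k ∈ I, R k ^ 2 := by
    rw [Finset.sum_comm]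
    simp only [add_comm (typeSum _) (typeSum _)] at h5 ⊢
    exact h5
  have h7 : 2 * ∑ k ∈ I, ∑ k' ∈ I, (if typeSum k + typeSum k' = v then R k * R k' else 0)
      ≤ ∑ k ∈ I, ∑ k' ∈ I, (if typeSum k + typeSum k' = v then R k ^ 2 else 0)
        + ∑ k ∈ I, ∑ k' ∈ I, (if typeSum k + typeSum k' = v then R k' ^ 2 else 0) := by
    rw [Finset.mul_sum, ← Finset.sum_add_distrib]
    refine Finset.sum_le_sum fun k _ => ?_
    rw [Finset.mul_sum, ← Finset.sum_add_distrib]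
    refine Finset.sum_le_sum fun k' _ => ?_
    split_ifs
    · have := two_mul_le_add_sq (R k) (R k'); linarith
    · simp
  have h8 : (4 : ℕ) ^ c * X.card ^ 2 = 2 ^ c * (2 ^ c * X.card ^ 2) := by
    rw [← mul_assoc, ← mul_pow]; norm_num
  rw [h8]
  have := Nat.mul_le_mul_left (2 ^ c) h4
  omega

end FourTuples

/-! ### Independent families that capture a further key -/

section Dependent

variable {c : ℕ} {A : Type*} [Fintype A] [DecidableEq A]

lemma keyVec_injective : Function.Injective (keyVec : (Fin c → A) → Fin c → A → ZMod 2) := by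
  intro x y h
  funext i
  have h1 := congrFun (congrFun h i) (x i)
  by_contra hne
  simp [keyVec, hne] at h1

lemma sum_keyVec (x : Fin c → A) (i : Fin c) : ∑ a, keyVec x i a = 1 := by
  simp [keyVec]

lemma exists_subset_sum {J : Type*} [Fintype J] [DecidableEq J] {f : J → Fin c → A}
    {y : Fin c → A}
    (hy : keyVec y ∈ Submodule.span (ZMod 2) (Set.range fun j => keyVec (f j))) :
    ∃ S : Finset J, keyVec y = ∑ j ∈ S, keyVec (f j) := by
  rw [Submodule.mem_span_range_iff_exists_fun] at hy
  obtain ⟨w, hw⟩ := hy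
  refine ⟨Finset.univ.filter fun j => w j = 1, ?_⟩
  rw [← hw, Finset.sum_filter]
  refine Finset.sum_congr rfl fun j _ => ?_
  rcases (by decide : ∀ z : ZMod 2, z = 0 ∨ z = 1) (w j) with h | h <;> simp [h]

/-- A key that is a sum of other keys is a sum of an odd number of them, by parity at a single
position, and not of just one. -/
lemma two_lt_card_of_sum {J : Type*} [Fintype J] [DecidableEq J] (hc : 1 ≤ c)
    {f : J → Fin c → A} {y : Fin c → A} (hne : ∀ j, f j ≠ y) {S : Finset J}
    (hS : keyVec y = ∑ j ∈ S, keyVec (f j)) : 2 < S.card := by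
  have hpar : (1 : ZMod 2) = S.card := by
    have h : ∑ a, keyVec y ⟨0, hc⟩ a = ∑ a, (∑ j ∈ S, keyVec (f j)) ⟨0, hc⟩ a := by rw [hS]
    simp only [Finset.sum_apply] at h
    rw [Finset.sum_comm, sum_keyVec] at h
    simpa [sum_keyVec] using h
  by_contra hlt
  have : S.card = 0 ∨ S.card = 1 ∨ S.card = 2 := by omega
  rcases this with h | h | h
  · rw [h] at hpar; exact absurd hpar (by decide)
  · obtain ⟨j, rfl⟩ := Finset.card_eq_one.1 h
    rw [Finset.sum_singleton] at hS
    exact hne j (keyVec_injective hS).symm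
  · rw [h] at hpar; exact absurd hpar (by decide)

open Classical in
/-- Capturing a further key costs one factor `|X|`: among the families indexed by `J`, only a
`O(1 / |X|)` proportion have a span containing another key. Three members of the dependency and the
captured key form a quadruple with sum determined by the remaining members, to which
`card_four_tuples` applies. -/
lemma card_dependent {J : Type*} [Fintype J] [DecidableEq J] (hc : 1 ≤ c) (X : Finset (Fin c → A)) :
    ((Fintype.piFinset fun _ : J => X).filter fun f =>
      ∃ y ∈ X, (∀ j, f j ≠ y) ∧
        keyVec y ∈ Submodule.span (ZMod 2) (Set.range fun j => keyVec (f j))).card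
      ≤ 2 ^ Fintype.card J * (4 ^ c * X.card ^ (Fintype.card J - 1)) := by
  have hsub : ((Fintype.piFinset fun _ : J => X).filter fun f =>
      ∃ y ∈ X, (∀ j, f j ≠ y) ∧
        keyVec y ∈ Submodule.span (ZMod 2) (Set.range fun j => keyVec (f j))) ⊆
      (Finset.univ : Finset (Finset J)).biUnion fun S =>
        (Fintype.piFinset fun _ : J => X).filter fun f =>
          ∃ y ∈ X, (∀ j, f j ≠ y) ∧ keyVec y = ∑ j ∈ S, keyVec (f j) := by
    intro f hf
    simp only [Finset.mem_filter, Finset.mem_biUnion, Finset.mem_univ, true_and] at hf ⊢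
    obtain ⟨hf, y, hy, hne, hs⟩ := hf
    obtain ⟨S, hS⟩ := exists_subset_sum hs
    exact ⟨S, hf, y, hy, hne, hS⟩
  refine (Finset.card_le_card hsub).trans ?_
  have hJ : (Finset.univ : Finset (Finset J)).card = 2 ^ Fintype.card J := by simp
  rw [← hJ]
  refine Finset.card_biUnion_le_card_mul _ _ _ fun S _ => ?_
  set F := (Fintype.piFinset fun _ : J => X).filter fun f =>
          ∃ y ∈ X, (∀ j, f j ≠ y) ∧ keyVec y = ∑ j ∈ S, keyVec (f j) with hF
  by_cases hS : 2 < S.card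
  swap
  · have : F = ∅ := by
      rw [hF, Finset.filter_eq_empty_iff]
      rintro f - ⟨y, -, hne, h⟩
      exact hS (two_lt_card_of_sum hc hne h)
    rw [this]; simp
  obtain ⟨j₁, j₂, j₃, h₁, h₂, h₃, h12, h13, h23⟩ := Finset.two_lt_card_iff.1 hS
  set D : Finset J := {j₁, j₂, j₃} with hD
  have hDS : D ⊆ S := by
    intro j hj
    simp only [hD, Finset.mem_insert, Finset.mem_singleton] at hj
    rcases hj with rfl | rfl | rfl <;> assumption
  have hDc : D.card = 3 := Finset.card_eq_three.2 ⟨_, _, _, h12, h13, h23, rfl⟩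
  have hcJ : 3 ≤ Fintype.card J := hDc ▸ Finset.card_le_univ D
  have hsplit : ∀ f : J → Fin c → A, ∑ j ∈ S, keyVec (f j) =
      ∑ j ∈ S \ D, keyVec (f j) + (keyVec (f j₁) + (keyVec (f j₂) + keyVec (f j₃))) := by
    intro f
    rw [← Finset.sum_sdiff hDS, hD, Finset.sum_insert (by simp [h12, h13]),
      Finset.sum_insert (by simp [h23]), Finset.sum_singleton]
  have hfib : ∀ g ∈ F.image (fun f (j : {j // j ∉ D}) => f j),
      (F.filter fun f => (fun (j : {j // j ∉ D}) => f j) = g).card ≤ 4 ^ c * X.card ^ 2 := by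
    intro g hg
    obtain ⟨f₀, hf₀, rfl⟩ := Finset.mem_image.1 hg
    refine le_trans ?_ (card_four_tuples X (∑ j ∈ S \ D, keyVec (f₀ j)))
    have hch : ∀ f : J → Fin c → A, ∃ y, f ∈ F → y ∈ X ∧ keyVec y = ∑ j ∈ S, keyVec (f j) := by
      intro f
      by_cases hf : f ∈ F
      · obtain ⟨y, hy, -, h⟩ := (Finset.mem_filter.1 hf).2
        exact ⟨y, fun _ => ⟨hy, h⟩⟩
      · exact ⟨f j₁, fun h => absurd h hf⟩
    choose Y hY using hch
    refine Finset.card_le_card_of_injOn (fun f => ((f j₁, f j₂), (f j₃, Y f))) ?_ ?_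
    · intro f hf
      obtain ⟨hf, hr⟩ := Finset.mem_filter.1 hf
      obtain ⟨hy, hsum⟩ := hY f hf
      have hX := Fintype.mem_piFinset.1 (Finset.mem_filter.1 hf).1
      simp only [Finset.coe_filter, Finset.mem_product, Set.mem_ofPred_eq]
      refine ⟨⟨⟨hX _, hX _⟩, hX _, hy⟩, ?_⟩
      have hv : ∑ j ∈ S \ D, keyVec (f₀ j) = ∑ j ∈ S \ D, keyVec (f j) := by
        refine Finset.sum_congr rfl fun j hj => ?_
        exact congrArg keyVec (congrFun hr ⟨j, (Finset.mem_sdiff.1 hj).2⟩).symm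
      rw [hv, hsum, hsplit]
      funext i a
      simp only [Pi.add_apply]
      -- the vectors of the three keys occur twice on the left and cancel in characteristic two
      generalize keyVec (f j₁) i a = p
      generalize keyVec (f j₂) i a = q
      generalize keyVec (f j₃) i a = r
      generalize (∑ j ∈ S \ D, keyVec (f j)) i a = s
      revert p q r s
      decide
    · intro f hf f' hf' h
      have hr := (Finset.mem_filter.1 hf).2.trans (Finset.mem_filter.1 hf').2.symm
      simp only [Prod.mk.injEq] at h
      funext j
      by_cases hj : j ∈ D
      · simp only [hD, Finset.mem_insert, Finset.mem_singleton] at hj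
        rcases hj with rfl | rfl | rfl
        · exact h.1.1
        · exact h.1.2
        · exact h.2.1
      · exact congrFun hr ⟨j, hj⟩
  have himg : (F.image (fun f (j : {j // j ∉ D}) => f j)).card ≤ X.card ^ (Fintype.card J - 3) := by
    have : (Fintype.piFinset fun _ : {j // j ∉ D} => X).card = X.card ^ (Fintype.card J - 3) := by
      rw [Fintype.card_piFinset, Finset.prod_const, Finset.card_univ, Fintype.card_subtype_compl,
        Fintype.card_coe, hDc]
    rw [← this]
    refine Finset.card_le_card ?_
    intro g hg
    obtain ⟨f, hf, rfl⟩ := Finset.mem_image.1 hg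
    have hX := Fintype.mem_piFinset.1 (Finset.mem_filter.1 hf).1
    exact Fintype.mem_piFinset.2 fun j => hX _
  refine (Finset.card_le_mul_card_image F _ hfib).trans ?_
  refine (Nat.mul_le_mul_left _ himg).trans (le_of_eq ?_)
  rw [mul_assoc, ← pow_add]
  congr 2
  omega

end Dependent

/-! ### Tables compatible with an independent family -/

section Probability

variable {c b d : ℕ} {A : Type*} [Fintype A] [DecidableEq A]

/-- Index type for the edges of a tree with inner nodes `0, …, n - 1` where node `a` carries `sz a`
additional leaves. -/
abbrev Slots (n : ℕ) (sz : ℕ → ℕ) : Type := Fin n ⊕ (Σ a : Fin n, Fin (sz a))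

/-- The table `T` realizes the decorated tree with parent function `p` by the keys `f`: the key of
node `a` collides with the key of its parent on the side `(lab a).1`, and the key of every leaf at `a`
collides with the key of `a` on the side `(lab a).2`. -/
def Compat (p : ℕ → ℕ) {n : ℕ} {sz : ℕ → ℕ} (lab : Fin n → Fin d × Fin d)
    (f : Slots n sz → Fin c → A) (T : Fin d → Fin c → A → (Fin b → ZMod 2)) : Prop :=
  (∀ a a' : Fin n, (a : ℕ) ≠ 0 → (a' : ℕ) = p a →
    simpleTab (T (lab a).1) (f (Sum.inl a)) = simpleTab (T (lab a).1) (f (Sum.inl a'))) ∧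
  ∀ s : Σ a : Fin n, Fin (sz a),
    simpleTab (T (lab s.1).2) (f (Sum.inr s)) = simpleTab (T (lab s.1).2) (f (Sum.inl s.1))

/-- Independent key vectors can be hashed to arbitrary prescribed values. -/
lemma exists_table {J : Type*} {f : J → Fin c → A}
    (hf : LinearIndependent (ZMod 2) fun j => keyVec (f j)) (z : J → Fin b → ZMod 2) :
    ∃ T₀ : Fin c → A → Fin b → ZMod 2, ∀ j, simpleTab T₀ (f j) = z j := by
  set B := Module.Basis.span hf
  obtain ⟨g, hg⟩ := LinearMap.exists_extend (B.constr (ZMod 2) z)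
  refine ⟨fun i a => g (Pi.single i (Pi.single a 1)), fun j => ?_⟩
  have h1 : g (keyVec (f j)) = z j := by
    have h2 := LinearMap.congr_fun hg (B j)
    rw [Module.Basis.constr_basis] at h2
    rw [← h2, LinearMap.comp_apply, Submodule.subtype_apply, Module.Basis.span_apply]
  rw [← h1, ← Finset.univ_sum_single (keyVec (f j)), map_sum]
  rfl

/-- The solution `z` of `z 0 = 0` and `z (a + 1) = w a + z (p (a + 1))`, by recursion along the
parent function. -/
def solve (p : ℕ → ℕ) (w : ℕ → Fin b → ZMod 2) (hp : ∀ a, a ≠ 0 → p a < a) :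
    ℕ → Fin b → ZMod 2
  | 0 => 0
  | a + 1 =>
    have : p (a + 1) < a + 1 := hp _ (Nat.succ_ne_zero a)
    w a + solve p w hp (p (a + 1))

lemma simpleTab_add (T T' : Fin c → A → Fin b → ZMod 2) (x : Fin c → A) :
    simpleTab (T + T') x = simpleTab T x + simpleTab T' x := by
  simp [simpleTab, Finset.sum_add_distrib]

open Classical in
/-- For an independent family each collision constraint has probability `2 ^ (-b)`, independently
of the others. In counting form: translating the compatible tables by a table that realizes each
right-hand side `w` of the constraints gives disjoint translates. -/
lemma card_compat (p : ℕ → ℕ) (hp : ∀ a, a ≠ 0 → p a < a) (n : ℕ) (sz : ℕ → ℕ)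
    (lab : Fin (n + 1) → Fin d × Fin d) (f : Slots (n + 1) sz → Fin c → A)
    (hf : LinearIndependent (ZMod 2) fun j => keyVec (f j)) :
    (Finset.univ.filter fun T : Fin d → Fin c → A → (Fin b → ZMod 2) => Compat p lab f T).card *
        (2 ^ b) ^ (n + ∑ a : Fin (n + 1), sz a) ≤
      Fintype.card (Fin d → Fin c → A → (Fin b → ZMod 2)) := by
  have hY : (Finset.univ : Finset (Fin n ⊕ (Σ a : Fin (n + 1), Fin (sz a)) → Fin b → ZMod 2)).card
      = (2 ^ b) ^ (n + ∑ a : Fin (n + 1), sz a) := by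
    simp [Finset.card_univ, ZMod.card, pow_add]
  rw [← hY, ← Finset.card_product, ← Finset.card_univ]
  -- a section: for each right-hand side `w`, a table solving the constraints on every side at once
  have hsec : ∀ w : Fin n ⊕ (Σ a : Fin (n + 1), Fin (sz a)) → Fin b → ZMod 2,
      ∃ T₀ : Fin c → A → Fin b → ZMod 2,
        (∀ a : Fin n, ∀ a' : Fin (n + 1), (a' : ℕ) = p (a + 1) →
          simpleTab T₀ (f (Sum.inl a.succ)) = w (Sum.inl a) + simpleTab T₀ (f (Sum.inl a'))) ∧
        ∀ s : Σ a : Fin (n + 1), Fin (sz a),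
          simpleTab T₀ (f (Sum.inr s)) = w (Sum.inr s) + simpleTab T₀ (f (Sum.inl s.1)) := by
    intro w
    set w' : ℕ → Fin b → ZMod 2 := fun a => if h : a < n then w (Sum.inl ⟨a, h⟩) else 0
    set z := solve p w' hp with hz
    obtain ⟨T₀, hT₀⟩ := exists_table hf
      (Sum.elim (fun a => z a) (fun s => w (Sum.inr s) + z s.1))
    refine ⟨T₀, fun a a' h => ?_, fun s => ?_⟩
    · rw [hT₀, hT₀]
      simp only [Sum.elim_inl, Fin.val_succ, h]
      rw [hz, solve]
      simp [w']
    · rw [hT₀, hT₀]; rfl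
  choose S hS1 hS2 using hsec
  refine Finset.card_le_card_of_injOn (fun t => t.1 + fun _ => S t.2) (by simp) ?_
  rintro ⟨T, w⟩ hT ⟨T', w'⟩ hT' h
  simp only [Finset.coe_product, Set.mem_prod, Finset.coe_filter, Finset.mem_univ, true_and,
    Set.mem_ofPred_eq] at hT hT'
  replace hT := hT.1
  replace hT' := hT'.1
  have happ : ∀ j x, simpleTab (T j) x + simpleTab (S w) x =
      simpleTab (T' j) x + simpleTab (S w') x := by
    intro j x
    have := congrFun h j
    simp only [Pi.add_apply] at this
    rw [← simpleTab_add, ← simpleTab_add, this]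
  have hw : w = w' := by
    funext e
    rcases e with a | s
    · have ha : p (a + 1) < n + 1 := (hp _ (Nat.succ_ne_zero _)).trans (by omega)
      have e1 := hT.1 a.succ ⟨_, ha⟩ (by simp) (by simp)
      have e2 := hT'.1 a.succ ⟨_, ha⟩ (by simp) (by simp)
      have e3 := happ (lab a.succ).1 (f (Sum.inl a.succ))
      have e4 := happ (lab a.succ).1 (f (Sum.inl ⟨_, ha⟩))
      linear_combination e3 - e4 - e1 + e2 - hS1 w a ⟨_, ha⟩ rfl + hS1 w' a ⟨_, ha⟩ rfl
    · have e1 := hT.2 s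
      have e2 := hT'.2 s
      have e3 := happ (lab s.1).2 (f (Sum.inr s))
      have e4 := happ (lab s.1).2 (f (Sum.inl s.1))
      linear_combination e3 - e4 - e1 + e2 - hS2 w s + hS2 w' s
  subst hw
  simpa using h

end Probability

/-! ### Union bounds over families of keys -/

section Counting

variable {c b d : ℕ} {A : Type*} [Fintype A] [DecidableEq A]

/-- The permutation of the slots that permutes the leaves of each node. -/
def slotPerm {n : ℕ} {sz : ℕ → ℕ} (g : ∀ a : Fin n, Equiv.Perm (Fin (sz a))) :
    Slots n sz → Slots n sz :=
  Sum.map id (Equiv.sigmaCongrRight g)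

lemma slotPerm_injective {n : ℕ} {sz : ℕ → ℕ} (g : ∀ a : Fin n, Equiv.Perm (Fin (sz a))) :
    Function.Injective (slotPerm g) :=
  Function.Injective.sumMap Function.injective_id (Equiv.injective _)

lemma slotPerm_surjective {n : ℕ} {sz : ℕ → ℕ} (g : ∀ a : Fin n, Equiv.Perm (Fin (sz a))) :
    Function.Surjective (slotPerm g) :=
  Function.Surjective.sumMap Function.surjective_id (Equiv.surjective _)

lemma Compat.comp_slotPerm {p : ℕ → ℕ} {n : ℕ} {sz : ℕ → ℕ} {lab : Fin n → Fin d × Fin d}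
    {f : Slots n sz → Fin c → A} {T : Fin d → Fin c → A → (Fin b → ZMod 2)}
    (h : Compat p lab f T) (g : ∀ a : Fin n, Equiv.Perm (Fin (sz a))) :
    Compat p lab (f ∘ slotPerm g) T :=
  ⟨h.1, fun s => h.2 ⟨s.1, g s.1 s.2⟩⟩

open Classical in
/-- First moment bound for a family `F` of independent tuples closed under permuting leaves: each
realized tuple comes with its `∏ (sz a)!` rearrangements, which is where the factorials saved in the
union bound come from. -/
lemma card_exists_compat (p : ℕ → ℕ) (hp : ∀ a, a ≠ 0 → p a < a) (n : ℕ) (sz : ℕ → ℕ)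
    (F : Finset (Slots (n + 1) sz → Fin c → A))
    (hinj : ∀ f ∈ F, Function.Injective f)
    (hind : ∀ f ∈ F, LinearIndependent (ZMod 2) fun j => keyVec (f j))
    (hperm : ∀ f ∈ F, ∀ g, f ∘ slotPerm g ∈ F) :
    (Finset.univ.filter fun T : Fin d → Fin c → A → (Fin b → ZMod 2) =>
        ∃ lab, ∃ f ∈ F, Compat p lab f T).card * (∏ a : Fin (n + 1), (sz a).factorial) *
        (2 ^ b) ^ (n + ∑ a : Fin (n + 1), sz a) ≤
      (d * d) ^ (n + 1) * F.card * Fintype.card (Fin d → Fin c → A → (Fin b → ZMod 2)) := by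
  set R : Finset ((Fin (n + 1) → Fin d × Fin d) × (Slots (n + 1) sz → Fin c → A)) :=
    Finset.univ ×ˢ F with hR
  have hRc : R.card = (d * d) ^ (n + 1) * F.card := by
    simp [hR, Finset.card_product]
  set bad := Finset.univ.filter fun T : Fin d → Fin c → A → (Fin b → ZMod 2) =>
        ∃ lab, ∃ f ∈ F, Compat p lab f T with hbad
  -- double count of the pairs of a bad table and a labelled family compatible with it
  have h1 : bad.card * (∏ a : Fin (n + 1), (sz a).factorial) ≤
      ∑ T ∈ bad, (R.filter fun t => Compat p t.1 t.2 T).card := by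
    rw [← smul_eq_mul, ← Finset.sum_const]
    refine Finset.sum_le_sum fun T hT => ?_
    obtain ⟨lab, f, hf, hc⟩ := (Finset.mem_filter.1 hT).2
    have hG : (Finset.univ : Finset (∀ a : Fin (n + 1), Equiv.Perm (Fin (sz a)))).card =
        ∏ a : Fin (n + 1), (sz a).factorial := by
      simp [Finset.card_univ, Fintype.card_perm]
    rw [← hG]
    refine Finset.card_le_card_of_injOn (fun g => (lab, f ∘ slotPerm g)) ?_ ?_
    · intro g _
      simp only [Finset.coe_filter, Set.mem_ofPred_eq, hR, Finset.mem_product, Finset.mem_univ,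
        true_and]
      exact ⟨hperm f hf g, hc.comp_slotPerm g⟩
    · intro g _ g' _ h
      simp only [Prod.mk.injEq, true_and] at h
      funext a
      ext j
      have := hinj f hf (congrFun h (Sum.inr ⟨a, j⟩))
      simp only [slotPerm, Sum.map_inr, Equiv.sigmaCongrRight_apply, Sum.inr.injEq,
        Sigma.mk.injEq, heq_eq_eq, true_and] at this
      rw [this]
  have h2 : ∑ T ∈ bad, (R.filter fun t => Compat p t.1 t.2 T).card ≤
      ∑ t ∈ R, (Finset.univ.filter fun T : Fin d → Fin c → A → (Fin b → ZMod 2) =>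
        Compat p t.1 t.2 T).card := by
    refine (Finset.sum_le_sum_of_subset (Finset.subset_univ bad)).trans (le_of_eq ?_)
    simp only [Finset.card_filter]
    exact Finset.sum_comm
  calc _ ≤ (∑ t ∈ R, (Finset.univ.filter fun T : Fin d → Fin c → A → (Fin b → ZMod 2) =>
        Compat p t.1 t.2 T).card) * (2 ^ b) ^ (n + ∑ a : Fin (n + 1), sz a) :=
          Nat.mul_le_mul_right _ (h1.trans h2)
    _ ≤ ∑ t ∈ R, Fintype.card (Fin d → Fin c → A → (Fin b → ZMod 2)) := by
        rw [Finset.sum_mul]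
        refine Finset.sum_le_sum fun t ht => ?_
        exact card_compat p hp n sz t.1 t.2 (hind _ (Finset.mem_product.1 ht).2)
    _ = _ := by rw [Finset.sum_const, smul_eq_mul, hRc]

lemma card_slots (n : ℕ) (sz : ℕ → ℕ) :
    Fintype.card (Slots (n + 1) sz) = n + ∑ a : Fin (n + 1), sz a + 1 := by
  simp [Slots]; omega

open Classical in
/-- Union bound over all independent families: up to constants per edge, a tree with `E` edges
has `|X| ^ E` families and `E - 1` constraints, leaving a single factor `|X|`. -/
lemma card_independent_copies (p : ℕ → ℕ) (hp : ∀ a, a ≠ 0 → p a < a) (n : ℕ) (sz : ℕ → ℕ)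
    (X : Finset (Fin c → A)) (Λ : ℕ) (hX : X.card ≤ Λ * 2 ^ b) :
    (Finset.univ.filter fun T : Fin d → Fin c → A → (Fin b → ZMod 2) =>
        ∃ (lab : Fin (n + 1) → Fin d × Fin d) (f : Slots (n + 1) sz → Fin c → A),
          (∀ j, f j ∈ X) ∧ Function.Injective f ∧
          (LinearIndependent (ZMod 2) fun j => keyVec (f j)) ∧ Compat p lab f T).card *
        (∏ a : Fin (n + 1), (sz a).factorial) ≤
      (d * d) ^ (n + 1) * (X.card * Λ ^ (n + ∑ a : Fin (n + 1), sz a)) *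
        Fintype.card (Fin d → Fin c → A → (Fin b → ZMod 2)) := by
  set E := n + ∑ a : Fin (n + 1), sz a with hE
  have h := card_exists_compat (b := b) (d := d) p hp n sz
    ((Fintype.piFinset fun _ : Slots (n + 1) sz => X).filter fun f =>
      Function.Injective f ∧ LinearIndependent (ZMod 2) fun j => keyVec (f j))
    (fun f hf => (Finset.mem_filter.1 hf).2.1) (fun f hf => (Finset.mem_filter.1 hf).2.2)
    (fun f hf g => by
      simp only [Finset.mem_filter, Fintype.mem_piFinset] at hf ⊢
      exact ⟨fun j => hf.1 _, hf.2.1.comp (slotPerm_injective g),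
        hf.2.2.comp _ (slotPerm_injective g)⟩)
  have hF : ((Fintype.piFinset fun _ : Slots (n + 1) sz => X).filter fun f =>
      Function.Injective f ∧ LinearIndependent (ZMod 2) fun j => keyVec (f j)).card ≤
      X.card * Λ ^ E * (2 ^ b) ^ E := by
    refine (Finset.card_filter_le _ _).trans ?_
    rw [Fintype.card_piFinset, Finset.prod_const, Finset.card_univ, card_slots, ← hE, pow_succ',
      mul_assoc, ← mul_pow]
    exact Nat.mul_le_mul_left _ (Nat.pow_le_pow_left hX _)
  refine Nat.le_of_mul_le_mul_right (c := (2 ^ b) ^ E) ?_ (by positivity)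
  refine le_trans (le_of_eq ?_) (h.trans
    ((Nat.mul_le_mul_right _ (Nat.mul_le_mul_left _ hF)).trans (le_of_eq ?_)))
  · congr 4
    ext T
    simp only [Finset.mem_filter, Fintype.mem_piFinset, and_assoc]
  · ring

open Classical in
/-- Union bound over the independent families whose span captures a further key of `X`: by
`card_dependent` the remaining factor `|X|` of `card_independent_copies` disappears. -/
lemma card_dependent_copies (hc : 1 ≤ c) (p : ℕ → ℕ) (hp : ∀ a, a ≠ 0 → p a < a) (n : ℕ)
    (sz : ℕ → ℕ) (X : Finset (Fin c → A)) (Λ : ℕ) (hX : X.card ≤ Λ * 2 ^ b) :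
    (Finset.univ.filter fun T : Fin d → Fin c → A → (Fin b → ZMod 2) =>
        ∃ (lab : Fin (n + 1) → Fin d × Fin d) (f : Slots (n + 1) sz → Fin c → A),
          (∀ j, f j ∈ X) ∧ Function.Injective f ∧
          (LinearIndependent (ZMod 2) fun j => keyVec (f j)) ∧
          (∃ y ∈ X, (∀ j, f j ≠ y) ∧
            keyVec y ∈ Submodule.span (ZMod 2) (Set.range fun j => keyVec (f j))) ∧
          Compat p lab f T).card *
        (∏ a : Fin (n + 1), (sz a).factorial) ≤
      (d * d) ^ (n + 1) * (2 * 4 ^ c * (2 * Λ) ^ (n + ∑ a : Fin (n + 1), sz a)) *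
        Fintype.card (Fin d → Fin c → A → (Fin b → ZMod 2)) := by
  set E := n + ∑ a : Fin (n + 1), sz a with hE
  set F := ((Fintype.piFinset fun _ : Slots (n + 1) sz => X).filter fun f =>
      Function.Injective f ∧ (LinearIndependent (ZMod 2) fun j => keyVec (f j)) ∧
      ∃ y ∈ X, (∀ j, f j ≠ y) ∧
        keyVec y ∈ Submodule.span (ZMod 2) (Set.range fun j => keyVec (f j))) with hFdef
  have h := card_exists_compat (b := b) (d := d) p hp n sz F
    (fun f hf => (Finset.mem_filter.1 hf).2.1) (fun f hf => (Finset.mem_filter.1 hf).2.2.1)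
    (fun f hf g => by
      simp only [hFdef, Finset.mem_filter, Fintype.mem_piFinset] at hf ⊢
      obtain ⟨h1, h2, h3, y, hy, hne, hs⟩ := hf
      refine ⟨fun j => h1 _, h2.comp (slotPerm_injective g), h3.comp _ (slotPerm_injective g),
        y, hy, fun j => hne _, ?_⟩
      have : (Set.range fun j => keyVec ((f ∘ slotPerm g) j)) =
          Set.range fun j => keyVec (f j) :=
        (slotPerm_surjective g).range_comp fun j => keyVec (f j)
      rwa [this])
  have hF : F.card ≤ 2 * 4 ^ c * (2 * Λ) ^ E * (2 ^ b) ^ E := by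
    refine le_trans (Finset.card_le_card ?_)
      ((card_dependent (J := Slots (n + 1) sz) hc X).trans ?_)
    · intro f hf
      have := Finset.mem_filter.1 hf
      exact Finset.mem_filter.2
        ⟨this.1, this.2.2.2⟩
    · rw [card_slots, ← hE, Nat.add_sub_cancel]
      calc 2 ^ (E + 1) * (4 ^ c * X.card ^ E) ≤ 2 ^ (E + 1) * (4 ^ c * (Λ * 2 ^ b) ^ E) := by
            gcongr
        _ = _ := by rw [mul_pow, mul_pow]; ring
  refine Nat.le_of_mul_le_mul_right (c := (2 ^ b) ^ E) ?_ (by positivity)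
  refine le_trans (le_of_eq ?_) (h.trans
    ((Nat.mul_le_mul_right _ (Nat.mul_le_mul_left _ hF)).trans (le_of_eq ?_)))
  · congr 4
    ext T
    simp only [hFdef, Finset.mem_filter, Fintype.mem_piFinset, and_assoc]
  · ring

end Counting

/-! ### Growing the tree one key at a time -/

section Dichotomy

variable {c b d : ℕ} {A : Type*} [Fintype A] [DecidableEq A]

/-- Star sizes of the tree stopped at node `i`, with only `l` of its leaves attached so far. -/
def trunc (sz : ℕ → ℕ) (i l : ℕ) : ℕ → ℕ := fun a => if a < i then sz a else l

/-- Distinct keys `x a` (nodes `a ≤ N`) and `y a j` (leaves) of `X` forming a realized decorated tree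
in the sense of `Compat`, all indexed by natural numbers so that truncations are easy to form. -/
structure Config (X : Finset (Fin c → A)) (p : ℕ → ℕ)
    (T : Fin d → Fin c → A → (Fin b → ZMod 2)) (N : ℕ) (sz : ℕ → ℕ)
    (x : ℕ → Fin c → A) (y : ℕ → ℕ → Fin c → A) (lab : ℕ → Fin d × Fin d) : Prop where
  x_mem : ∀ a ≤ N, x a ∈ X
  y_mem : ∀ a ≤ N, ∀ j < sz a, y a j ∈ X
  x_inj : ∀ a ≤ N, ∀ a' ≤ N, x a = x a' → a = a'
  y_inj : ∀ a ≤ N, ∀ a' ≤ N, ∀ j < sz a, ∀ j' < sz a', y a j = y a' j' → a = a' ∧ j = j'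
  xy_ne : ∀ a ≤ N, ∀ a' ≤ N, ∀ j < sz a', x a ≠ y a' j
  x_par : ∀ a ≤ N, a ≠ 0 →
    simpleTab (T (lab a).1) (x a) = simpleTab (T (lab a).1) (x (p a))
  y_par : ∀ a ≤ N, ∀ j < sz a,
    simpleTab (T (lab a).2) (y a j) = simpleTab (T (lab a).2) (x a)

/-- The keys of a configuration at the nodes `a < n`, with `sz a` leaves at node `a`. -/
def slotKeys (x : ℕ → Fin c → A) (y : ℕ → ℕ → Fin c → A) (n : ℕ) (sz : ℕ → ℕ) :
    Slots n sz → Fin c → A :=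
  Sum.elim (fun a => x a) (fun s => y s.1 s.2)

lemma range_slotKeys (x : ℕ → Fin c → A) (y : ℕ → ℕ → Fin c → A) (n : ℕ) (sz : ℕ → ℕ) :
    Set.range (slotKeys x y n sz) =
      {z | (∃ a < n, x a = z) ∨ ∃ a < n, ∃ j < sz a, y a j = z} := by
  ext z
  constructor
  · rintro ⟨a | ⟨a, j⟩, rfl⟩
    · exact Or.inl ⟨a, a.2, rfl⟩
    · exact Or.inr ⟨a, a.2, j, j.2, rfl⟩
  · rintro (⟨a, ha, rfl⟩ | ⟨a, ha, j, hj, rfl⟩)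
    · exact ⟨Sum.inl ⟨a, ha⟩, rfl⟩
    · exact ⟨Sum.inr ⟨⟨a, ha⟩, ⟨j, hj⟩⟩, rfl⟩

variable {X : Finset (Fin c → A)} {p : ℕ → ℕ} {T : Fin d → Fin c → A → (Fin b → ZMod 2)}
  {N : ℕ} {sz : ℕ → ℕ} {x : ℕ → Fin c → A} {y : ℕ → ℕ → Fin c → A} {lab : ℕ → Fin d × Fin d}

lemma trunc_le {i l a : ℕ} (hl : l ≤ sz i) (ha : a < i + 1) : trunc sz i l a ≤ sz a := by
  unfold trunc
  split_ifs with h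
  · exact le_rfl
  · have : a = i := by omega
    rw [this]; exact hl

lemma Config.slotKeys_injective (C : Config X p T N sz x y lab) {i l : ℕ} (hi : i ≤ N)
    (hl : l ≤ sz i) : Function.Injective (slotKeys x y (i + 1) (trunc sz i l)) := by
  have hN : ∀ a : Fin (i + 1), (a : ℕ) ≤ N := fun a => by omega
  have hs : ∀ (a : Fin (i + 1)) (j : Fin (trunc sz i l a)), (j : ℕ) < sz a := fun a j =>
    j.2.trans_le (trunc_le hl a.2)
  rintro (a | ⟨a, j⟩) (a' | ⟨a', j'⟩) h
  · exact congrArg Sum.inl (Fin.ext (C.x_inj _ (hN a) _ (hN a') h))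
  · exact absurd h (C.xy_ne _ (hN a) _ (hN a') _ (hs _ _))
  · exact absurd h.symm (C.xy_ne _ (hN a') _ (hN a) _ (hs _ _))
  · obtain ⟨h1, h2⟩ := C.y_inj _ (hN a) _ (hN a') _ (hs _ _) _ (hs _ _) h
    obtain rfl := Fin.ext h1
    obtain rfl := Fin.ext h2
    rfl

lemma Config.slotKeys_mem (C : Config X p T N sz x y lab) {i l : ℕ} (hi : i ≤ N)
    (hl : l ≤ sz i) (j) : slotKeys x y (i + 1) (trunc sz i l) j ∈ X := by
  rcases j with a | ⟨a, j⟩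
  · exact C.x_mem _ (by omega)
  · exact C.y_mem _ (by omega) _ (j.2.trans_le (trunc_le hl a.2))

lemma Config.compat (C : Config X p T N sz x y lab) {i l : ℕ} (hi : i ≤ N) (hl : l ≤ sz i) :
    Compat p (fun a : Fin (i + 1) => lab a) (slotKeys x y (i + 1) (trunc sz i l)) T := by
  refine ⟨fun a a' ha h => ?_, fun s => ?_⟩
  · have := C.x_par a (by omega) ha
    rw [← h] at this
    exact this
  · exact C.y_par _ (by omega) _ (s.2.2.trans_le (trunc_le hl s.1.2))

/-- Starting from the independent root star, keys are added in order. Either independence survives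
to the end, or at the first failure the keys present are independent and span a further key. -/
lemma Config.dichotomy (C : Config X p T N sz x y lab)
    (h0 : LinearIndependent (ZMod 2) fun j => keyVec (slotKeys x y (0 + 1) (trunc sz 0 (sz 0)) j)) :
    (LinearIndependent (ZMod 2) fun j => keyVec (slotKeys x y (N + 1) (trunc sz N (sz N)) j)) ∨
    ∃ i ≤ N, ∃ l ≤ sz i, (i = 0 → l = sz 0) ∧
      (LinearIndependent (ZMod 2) fun j => keyVec (slotKeys x y (i + 1) (trunc sz i l) j)) ∧
      ∃ z ∈ X, (∀ j, slotKeys x y (i + 1) (trunc sz i l) j ≠ z) ∧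
        keyVec z ∈ Submodule.span (ZMod 2)
          (Set.range fun j => keyVec (slotKeys x y (i + 1) (trunc sz i l) j)) := by
  by_contra hcon
  rw [not_or] at hcon
  obtain ⟨hN, hcon⟩ := hcon
  -- adjoining a new key preserves independence
  have step : ∀ i ≤ N, ∀ l ≤ sz i, (i = 0 → l = sz 0) →
      (LinearIndependent (ZMod 2) fun j => keyVec (slotKeys x y (i + 1) (trunc sz i l) j)) →
      ∀ i' ≤ N, ∀ l' ≤ sz i', ∀ z ∈ X,
        Set.range (slotKeys x y (i' + 1) (trunc sz i' l')) =
          insert z (Set.range (slotKeys x y (i + 1) (trunc sz i l))) →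
        LinearIndependent (ZMod 2)
          fun j => keyVec (slotKeys x y (i' + 1) (trunc sz i' l') j) := by
    intro i hi l hl hi0 hind i' hi' l' hl' z hz hr
    have e1 := linearIndepOn_range_iff (R := ZMod 2) (C.slotKeys_injective hi hl) keyVec
    have e2 := linearIndepOn_range_iff (R := ZMod 2) (C.slotKeys_injective hi' hl') keyVec
    refine e2.1 ?_
    rw [hr]
    by_cases hzr : z ∈ Set.range (slotKeys x y (i + 1) (trunc sz i l))
    · rw [Set.insert_eq_of_mem hzr]; exact e1.2 hind
    · rw [linearIndepOn_insert hzr]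
      refine ⟨e1.2 hind, fun hs => ?_⟩
      refine hcon ⟨i, hi, l, hl, hi0, hind, z, hz, fun j hj => hzr ⟨j, hj⟩, ?_⟩
      rwa [← Set.range_comp] at hs
  have main : ∀ i ≤ N, ∀ l ≤ sz i, (i = 0 → l = sz 0) →
      LinearIndependent (ZMod 2)
        fun j => keyVec (slotKeys x y (i + 1) (trunc sz i l) j) := by
    intro i
    induction i with
    | zero => intro _ l _ hl; rw [hl rfl]; exact h0
    | succ i ih =>
      intro hi l
      induction l with
      | zero =>
        intro _ _
        refine step i (by omega) (sz i) le_rfl (fun h => by rw [h])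
          (ih (by omega) _ le_rfl (fun h => by rw [h])) (i + 1) hi 0 (by omega) (x (i + 1))
          (C.x_mem _ hi) ?_
        rw [range_slotKeys, range_slotKeys]
        ext z
        simp only [Set.mem_insert_iff, Set.mem_ofPred_eq]
        constructor
        · rintro (⟨a, ha, rfl⟩ | ⟨a, ha, j, hj, rfl⟩)
          · by_cases h : a = i + 1
            · left; rw [h]
            · right; left; exact ⟨a, by omega, rfl⟩
          · right; right
            unfold trunc at hj ⊢
            split_ifs at hj with h
            · refine ⟨a, h, j, ?_, rfl⟩
              split_ifs
              · exact hj
              · have : a = i := by omega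
                rwa [← this]
            · omega
        · rintro (rfl | ⟨a, ha, rfl⟩ | ⟨a, ha, j, hj, rfl⟩)
          · left; exact ⟨i + 1, by omega, rfl⟩
          · left; exact ⟨a, by omega, rfl⟩
          · right; exact ⟨a, by omega, j, by
              have := trunc_le (l := sz i) le_rfl ha
              unfold trunc; rw [if_pos ha]; omega, rfl⟩
      | succ l ihl =>
        intro hl _
        refine step (i + 1) hi l (by omega) (by omega) (ihl (by omega) (by omega)) (i + 1) hi
          (l + 1) hl (y (i + 1) l) (C.y_mem _ hi _ (by omega)) ?_
        rw [range_slotKeys, range_slotKeys]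
        ext z
        simp only [Set.mem_insert_iff, Set.mem_ofPred_eq]
        constructor
        · rintro (⟨a, ha, rfl⟩ | ⟨a, ha, j, hj, rfl⟩)
          · right; left; exact ⟨a, ha, rfl⟩
          · unfold trunc at hj ⊢
            split_ifs at hj with h
            · right; right; exact ⟨a, ha, j, by rwa [if_pos h], rfl⟩
            · have : a = i + 1 := by omega
              by_cases hjl : j = l
              · left; rw [this, hjl]
              · right; right; exact ⟨a, ha, j, by rw [if_neg h]; omega, rfl⟩
        · rintro (rfl | ⟨a, ha, rfl⟩ | ⟨a, ha, j, hj, rfl⟩)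
          · right; exact ⟨i + 1, by omega, l, by simp [trunc], rfl⟩
          · left; exact ⟨a, ha, rfl⟩
          · right
            refine ⟨a, ha, j, ?_, rfl⟩
            unfold trunc at hj ⊢
            split_ifs at hj ⊢ <;> omega
  exact hN (main N le_rfl _ le_rfl fun h => by rw [h])

end Dichotomy

/-! ### Edges of the binomial tree as a tree of strings -/

section Tree

variable {d : ℕ} [NeZero d]

/-- The edge of `B_{d,K}` whose vertices agree with `u` below level `l`, vanish above it, and are
free at level `l`. -/
def treeEdge (K : ℕ) (u : ℕ → Fin d) (l : ℕ) : Finset (Fin K → Fin d) :=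
  Finset.univ.image fun i : Fin d => fun t : Fin K =>
    if (t : ℕ) < l then u t else if (t : ℕ) = l then i else 0

lemma treeEdge_mem (K : ℕ) : ∀ (u : ℕ → Fin d) (l : ℕ), l < K → treeEdge K u l ∈ BEdges d K := by
  induction K with
  | zero => intro u l hl; omega
  | succ K ih =>
    intro u l hl
    rw [BEdges, Finset.mem_insert]
    rcases l with _ | l
    · left
      unfold treeEdge
      congr 1
      funext i t
      refine Fin.cases ?_ (fun t => ?_) t <;> simp
    · right
      rw [Finset.mem_biUnion]
      refine ⟨u 0, Finset.mem_univ _, Finset.mem_image.2 ⟨_, ih (fun t => u (t + 1)) l (by omega), ?_⟩⟩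
      unfold treeEdge
      rw [Finset.image_image]
      congr 1
      funext i t
      refine Fin.cases ?_ (fun t => ?_) t <;> simp

lemma mem_treeEdge {K : ℕ} {u v : ℕ → Fin d} {l : ℕ} (h1 : ∀ t < l, v t = u t)
    (h2 : ∀ t, l < t → v t = 0) : (fun t : Fin K => v t) ∈ treeEdge K u l := by
  refine Finset.mem_image.2 ⟨v l, Finset.mem_univ _, ?_⟩
  funext t
  split_ifs with h h'
  · exact (h1 _ h).symm
  · rw [h']
  · exact (h2 _ (by omega)).symm

/-- An edge of the `d`-nomial tree determines its level and its prefix. -/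
lemma treeEdge_inj (hd : 2 ≤ d) {K : ℕ} {u u' : ℕ → Fin d} {l l' : ℕ} (hl : l < K)
    (h : treeEdge K u l = treeEdge K u' l') : l = l' ∧ ∀ t < l, u t = u' t := by
  have hmem : ∀ i : Fin d, ∃ i' : Fin d, ∀ t : Fin K,
      (if (t : ℕ) < l' then u' t else if (t : ℕ) = l' then i' else 0) =
      (if (t : ℕ) < l then u t else if (t : ℕ) = l then i else 0) := by
    intro i
    have hi : (fun t : Fin K => if (t : ℕ) < l then u t else if (t : ℕ) = l then i else 0) ∈
        treeEdge K u' l' := by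
      rw [← h]; exact Finset.mem_image_of_mem _ (Finset.mem_univ i)
    obtain ⟨i', -, hi'⟩ := Finset.mem_image.1 hi
    exact ⟨i', fun t => congrFun hi' t⟩
  obtain ⟨i₀, h₀⟩ := hmem ⟨0, by omega⟩
  obtain ⟨i₁, h₁⟩ := hmem ⟨1, by omega⟩
  have hll : l = l' := by
    by_contra hne
    have a₀ := h₀ ⟨l, hl⟩
    have a₁ := h₁ ⟨l, hl⟩
    simp only [lt_irrefl, if_false, if_true, if_neg hne] at a₀ a₁
    rw [a₀] at a₁
    simp [Fin.ext_iff] at a₁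
  refine ⟨hll, fun t ht => ?_⟩
  have := h₀ ⟨t, by omega⟩
  simp only [← hll, if_pos ht] at this
  exact this.symm

/-- Parent function of the tree of inner nodes: the root `0` has the single child `1`, and every
other node `a` has the `d` children `d * a - d + 2, …, d * a + 1`. -/
def par (d a : ℕ) : ℕ := (a + (d - 2)) / d

/-- The digit by which the string of node `a` extends that of its parent. Together `par` and `dig`
are quotient and remainder of `a + (d - 2)` by `d`. -/
def dig (d : ℕ) [NeZero d] (a : ℕ) : Fin d := Fin.ofNat d (a + (d - 2))

lemma par_lt (hd : 2 ≤ d) (a : ℕ) (ha : a ≠ 0) : par d a < a := by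
  unfold par
  rw [Nat.div_lt_iff_lt_mul (by omega)]
  obtain ⟨e, rfl⟩ := Nat.exists_eq_add_of_le hd
  obtain ⟨m, rfl⟩ := Nat.exists_eq_succ_of_ne_zero ha
  simp only [Nat.add_sub_cancel_left, Nat.succ_eq_add_one]
  nlinarith [Nat.zero_le (m * e)]

/-- The level and the prefix of the edge of the `d`-nomial tree placed at inner node `a`. -/
def node (hd : 2 ≤ d) : ℕ → ℕ × (ℕ → Fin d)
  | 0 => (0, fun _ => 0)
  | a + 1 =>
    have : par d (a + 1) < a + 1 := par_lt hd _ (Nat.succ_ne_zero a)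
    ((node hd (par d (a + 1))).1 + 1,
      Function.update (node hd (par d (a + 1))).2 (node hd (par d (a + 1))).1 (dig d (a + 1)))

variable (hd : 2 ≤ d)

lemma node_zero : node hd 0 = (0, fun _ => 0) := by rw [node]

lemma node_of_ne_zero {a : ℕ} (ha : a ≠ 0) : node hd a =
    ((node hd (par d a)).1 + 1,
      Function.update (node hd (par d a)).2 (node hd (par d a)).1 (dig d a)) := by
  obtain ⟨m, rfl⟩ := Nat.exists_eq_succ_of_ne_zero ha
  rw [node]

lemma node_tail (a : ℕ) : ∀ t, (node hd a).1 ≤ t → (node hd a).2 t = 0 := by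
  induction a using Nat.strong_induction_on with
  | _ a ih =>
    intro t ht
    by_cases ha : a = 0
    · subst ha; rw [node_zero]
    · rw [node_of_ne_zero hd ha] at ht ⊢
      simp only at ht ⊢
      rw [Function.update_of_ne (by omega)]
      exact ih _ (par_lt hd a ha) _ (by omega)

lemma eq_of_par_dig {a a' : ℕ} (h1 : par d a = par d a') (h2 : dig d a = dig d a') : a = a' := by
  unfold par at h1
  have h3 : (a + (d - 2)) % d = (a' + (d - 2)) % d := congrArg Fin.val h2
  have e1 := Nat.div_add_mod (a + (d - 2)) d
  have e2 := Nat.div_add_mod (a' + (d - 2)) d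
  rw [h1, h3] at e1
  omega

lemma node_injective (a : ℕ) : ∀ a', node hd a = node hd a' → a = a' := by
  induction a using Nat.strong_induction_on with
  | _ a ih =>
    intro a' h
    by_cases ha : a = 0 <;> by_cases ha' : a' = 0
    · rw [ha, ha']
    · subst ha
      rw [node_zero, node_of_ne_zero hd ha'] at h
      exact absurd (congrArg Prod.fst h) (by simp)
    · subst ha'
      rw [node_zero, node_of_ne_zero hd ha] at h
      exact absurd (congrArg Prod.fst h) (by simp)
    · rw [node_of_ne_zero hd ha, node_of_ne_zero hd ha', Prod.mk.injEq] at h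
      obtain ⟨h1, h2⟩ := h
      have h1 : (node hd (par d a)).1 = (node hd (par d a')).1 := by omega
      have hdig := congrFun h2 (node hd (par d a)).1
      rw [Function.update_self, h1, Function.update_self] at hdig
      refine eq_of_par_dig (ih _ (par_lt hd a ha) _ (Prod.ext h1 ?_)) hdig
      funext t
      by_cases ht : t = (node hd (par d a)).1
      · rw [node_tail hd _ _ ht.ge, node_tail hd _ _ (by omega)]
      · have := congrFun h2 t
        rwa [Function.update_of_ne ht, Function.update_of_ne (by omega)] at this

/-- The nodes up to `d ^ D` lie within the first `D + 1` generations. -/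
lemma node_depth (D : ℕ) : ∀ a ≤ d ^ D, (node hd a).1 ≤ D + 1 := by
  induction D with
  | zero =>
    intro a ha
    rw [pow_zero] at ha
    by_cases h : a = 0
    · subst h; rw [node_zero]; simp
    · have : a = 1 := by omega
      have hp := par_lt hd a h
      have h0 : par d a = 0 := by omega
      rw [node_of_ne_zero hd h, h0, node_zero]
  | succ D ih =>
    intro a ha
    by_cases h : a = 0
    · subst h; rw [node_zero]; simp
    · rw [node_of_ne_zero hd h]
      have : par d a ≤ d ^ D := by
        unfold par
        rw [← Nat.lt_succ_iff, Nat.div_lt_iff_lt_mul (by omega)]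
        rw [pow_succ] at ha
        rw [Nat.succ_mul]
        omega
      have := ih _ this
      simp only
      omega

lemma node_length_pos {a : ℕ} (ha : a ≠ 0) : 0 < (node hd a).1 := by
  rw [node_of_ne_zero hd ha]; simp

/-- Strings of non-root nodes start with a nonzero digit, hence their edges avoid the star of the
root. -/
lemma node_head (a : ℕ) (ha : a ≠ 0) : (node hd a).2 0 ≠ 0 := by
  induction a using Nat.strong_induction_on with
  | _ a ih =>
    rw [node_of_ne_zero hd ha]
    by_cases h : par d a = 0
    · rw [h, node_zero]
      simp only [Function.update_self]
      have h1 : a < 2 := by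
        unfold par at h
        rw [Nat.div_eq_zero_iff] at h
        omega
      have : a = 1 := by omega
      subst this
      intro h2
      have h3 : (1 + (d - 2)) % d = 0 := by
        have := congrArg Fin.val h2
        simpa [dig] using this
      rw [Nat.mod_eq_of_lt (by omega)] at h3
      omega
    · simp only
      rw [Function.update_of_ne (node_length_pos hd h).ne]
      exact ih _ (par_lt hd a ha) h

/-- The vertex of the edge of node `a` that carries the leaves: the tree's own root for `a = 0`, and
otherwise the vertex with digit `1` at the level of the edge. A nonzero last digit makes the vertex
determine the node. -/
def starVertex (a : ℕ) : ℕ → Fin d :=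
  if a = 0 then fun _ => 0 else Function.update (node hd a).2 (node hd a).1 ⟨1, hd⟩

lemma starVertex_head (a : ℕ) (ha : a ≠ 0) : starVertex hd a 0 ≠ 0 := by
  rw [starVertex, if_neg ha, Function.update_of_ne (node_length_pos hd ha).ne]
  exact node_head hd a ha

lemma starVertex_of_lt {a t : ℕ} (ht : t < (node hd a).1) :
    starVertex hd a t = (node hd a).2 t := by
  by_cases ha : a = 0
  · subst ha; rw [node_zero] at ht; simp at ht
  · rw [starVertex, if_neg ha, Function.update_of_ne ht.ne]

lemma starVertex_tail {a t : ℕ} (ht : (node hd a).1 < t) : starVertex hd a t = 0 := by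
  by_cases ha : a = 0
  · subst ha; rw [starVertex, if_pos rfl]
  · rw [starVertex, if_neg ha, Function.update_of_ne ht.ne']
    exact node_tail hd a t ht.le

lemma starVertex_injective {a a' : ℕ} (ha : a ≠ 0) (ha' : a' ≠ 0)
    (h : starVertex hd a = starVertex hd a') : a = a' := by
  have h1 : ∀ a, a ≠ 0 → starVertex hd a (node hd a).1 ≠ 0 := by
    intro a ha
    rw [starVertex, if_neg ha, Function.update_self]
    intro h
    simpa using congrArg Fin.val h
  have hlen : (node hd a).1 = (node hd a').1 := by
    rcases lt_trichotomy (node hd a).1 (node hd a').1 with hlt | heq | hlt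
    · exact absurd (h ▸ starVertex_tail hd hlt) (h1 a' ha')
    · exact heq
    · exact absurd (h ▸ starVertex_tail hd hlt) (h1 a ha)
  refine node_injective hd a a' (Prod.ext hlen ?_)
  funext t
  by_cases ht : t < (node hd a).1
  · rw [← starVertex_of_lt hd ht, h, starVertex_of_lt hd (by omega)]
  · rw [node_tail hd _ _ (by omega), node_tail hd _ _ (by omega)]

end Tree

/-! ### The decorated tree inside a copy of the `d`-nomial tree -/

section Extraction

variable {c b d : ℕ} [NeZero d] {A : Type*} [Fintype A] [DecidableEq A]

/-- A copy of `B_{d,K}` contains a tree with `d ^ D + 1` inner nodes, `K - 1` leaves at the root and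
`s` leaves at every other node. The leaves at non-root nodes use the top `s` levels of the strings,
the inner nodes the levels at most `D + 1 < K - s`. -/
lemma exists_config (hd : 2 ≤ d) {D s K : ℕ} (hK : D + s + 2 ≤ K) {X : Finset (Fin c → A)}
    {T : Fin d → Fin c → A → (Fin b → ZMod 2)}
    (h : containsCopy (BEdges d K) X
      (fun x => Finset.univ.image fun j : Fin d => (simpleTab (T j) x, j))) :
    ∃ x y lab, Config X (par d) T (d ^ D) (fun a => if a = 0 then K - 1 else s) x y lab := by
  obtain ⟨φ, ψ, -, hψ, hE⟩ := h
  have hlab : ∀ v e, e ∈ BEdges d K → v ∈ e → (φ v).1 = simpleTab (T (φ v).2) (ψ e) := by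
    intro v e he hv
    have h1 : φ v ∈ e.image φ := Finset.mem_image_of_mem _ hv
    rw [(hE e he).2] at h1
    obtain ⟨j, -, hj⟩ := Finset.mem_image.1 h1
    rw [← hj]
  have hshare : ∀ v e e', e ∈ BEdges d K → e' ∈ BEdges d K → v ∈ e → v ∈ e' →
      simpleTab (T (φ v).2) (ψ e) = simpleTab (T (φ v).2) (ψ e') := fun v e e' he he' hv hv' =>
    (hlab v e he hv).symm.trans (hlab v e' he' hv')
  -- levels of the leaf edges: at the root from level `1` on, elsewhere the top `s` levels
  set lv : ℕ → ℕ → ℕ := fun a j => if a = 0 then 1 + j else K - s + j with hlv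
  set x : ℕ → Fin c → A := fun a => ψ (treeEdge K (node hd a).2 (node hd a).1) with hx
  set y : ℕ → ℕ → Fin c → A := fun a j => ψ (treeEdge K (starVertex hd a) (lv a j)) with hy
  have hxl : ∀ a ≤ d ^ D, (node hd a).1 < K - s := fun a ha => by
    have := node_depth hd D a ha; omega
  have hxm : ∀ a ≤ d ^ D, treeEdge K (node hd a).2 (node hd a).1 ∈ BEdges d K := fun a ha =>
    treeEdge_mem _ _ _ (by have := hxl a ha; omega)
  have hyl : ∀ a j, j < (if a = 0 then K - 1 else s) → lv a j < K := fun a j hj => by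
    simp only [hlv]; split_ifs at hj ⊢ <;> omega
  have hym : ∀ a j, j < (if a = 0 then K - 1 else s) →
      treeEdge K (starVertex hd a) (lv a j) ∈ BEdges d K := fun a j hj =>
    treeEdge_mem _ _ _ (hyl a j hj)
  have hlt : ∀ a ≤ d ^ D, ∀ j, (node hd a).1 < lv a j := fun a ha j => by
    simp only [hlv]
    split_ifs with h
    · subst h; rw [node_zero]; omega
    · have := hxl a ha; omega
  refine ⟨x, y, fun a => ((φ fun t => (node hd a).2 t).2, (φ fun t => starVertex hd a t).2),
    ?_, ?_, ?_, ?_, ?_, ?_, ?_⟩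
  · exact fun a ha => (hE _ (hxm a ha)).1
  · exact fun a _ j hj => (hE _ (hym a j hj)).1
  · intro a ha a' ha' h
    obtain ⟨h1, h2⟩ := treeEdge_inj hd (by have := hxl a ha; omega) (hψ (hxm a ha) (hxm a' ha') h)
    refine node_injective hd a a' (Prod.ext h1 ?_)
    funext t
    by_cases ht : t < (node hd a).1
    · exact h2 t ht
    · rw [node_tail hd _ _ (by omega), node_tail hd _ _ (by omega)]
  · intro a ha a' ha' j hj j' hj' h
    obtain ⟨h1, h2⟩ := treeEdge_inj hd (hyl a j hj) (hψ (hym a j hj) (hym a' j' hj') h)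
    have hpos : 0 < lv a j := (Nat.zero_le _).trans_lt (hlt a ha j)
    have ht0 := h2 0 hpos
    have haa : a = a' := by
      by_cases h0 : a = 0 <;> by_cases h0' : a' = 0
      · rw [h0, h0']
      · exact absurd (ht0.symm.trans (by rw [h0]; rfl)) (starVertex_head hd a' h0')
      · exact absurd (ht0.trans (by rw [h0']; rfl)) (starVertex_head hd a h0)
      · refine starVertex_injective hd h0 h0' ?_
        funext t
        by_cases ht : t < lv a j
        · exact h2 t ht
        · have e1 := hlt a ha j
          have e2 := hlt a' ha' j'
          rw [starVertex_tail hd (by omega), starVertex_tail hd (by omega)]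
    refine ⟨haa, ?_⟩
    subst haa
    simp only [hlv] at h1
    split_ifs at h1 <;> omega
  · intro a ha a' ha' j hj h
    obtain ⟨h1, h2⟩ := treeEdge_inj hd (by have := hxl a ha; omega) (hψ (hxm a ha) (hym a' j hj) h)
    by_cases h0 : a' = 0
    · have hpos : 0 < (node hd a).1 := by rw [h1]; exact (Nat.zero_le _).trans_lt (hlt a' ha' j)
      have ha0 : a ≠ 0 := by
        rintro rfl; rw [node_zero] at hpos; exact absurd hpos (lt_irrefl _)
      exact node_head hd a ha0 ((h2 0 hpos).trans (by rw [h0]; rfl))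
    · have := hxl a ha
      rw [h1] at this
      simp only [hlv, if_neg h0] at this
      omega
  · intro a ha h0
    have hpar := par_lt hd a h0
    refine hshare _ _ _ (hxm a ha) (hxm _ (hpar.le.trans ha)) ?_ ?_
    · exact mem_treeEdge (fun t _ => rfl) fun t ht => node_tail hd a t ht.le
    · refine mem_treeEdge (fun t ht => ?_) fun t ht => ?_
      · rw [node_of_ne_zero hd h0]; exact Function.update_of_ne ht.ne _ _
      · refine node_tail hd a t ?_
        rw [node_of_ne_zero hd h0]; exact ht
  · intro a ha j hj
    refine hshare _ _ _ (hym a j hj) (hxm a ha) ?_ ?_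
    · exact mem_treeEdge (fun t _ => rfl) fun t ht => starVertex_tail hd ((hlt a ha j).trans ht)
    · exact mem_treeEdge (fun t ht => starVertex_of_lt hd ht) fun t ht => starVertex_tail hd ht

end Extraction

/-! ### An independent star at the root -/

section Selection

variable {c b d : ℕ} {A : Type*} [Fintype A] [DecidableEq A]

/-- Over `F₂` the span of `r` vectors has at most `2 ^ r` elements. -/
lemma exists_not_mem_span {U V : Finset (Fin c → A)} (h : 2 ^ U.card < V.card) :
    ∃ z ∈ V, keyVec z ∉ Submodule.span (ZMod 2) (keyVec '' (U : Set (Fin c → A))) := by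
  by_contra hcon
  push Not at hcon
  have hsub : ∀ z ∈ V, ∃ S : Finset U, keyVec z = ∑ j ∈ S, keyVec (j : Fin c → A) := by
    intro z hz
    refine exists_subset_sum (f := fun j : U => (j : Fin c → A)) ?_
    have := hcon z hz
    rwa [Set.image_eq_range] at this
  have hch : ∀ z, ∃ S : Finset U, z ∈ V → keyVec z = ∑ j ∈ S, keyVec (j : Fin c → A) := by
    intro z
    by_cases hz : z ∈ V
    · obtain ⟨S, hS⟩ := hsub z hz; exact ⟨S, fun _ => hS⟩
    · exact ⟨∅, fun h => absurd h hz⟩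
  choose S hS using hch
  have hcard : (Finset.univ : Finset (Finset U)).card = 2 ^ U.card := by simp
  rw [← hcard] at h
  refine absurd (Finset.card_le_card_of_injOn S (by simp) ?_) (not_le.2 h)
  intro z hz z' hz' he
  exact keyVec_injective (by rw [hS z hz, hS z' hz', he])

/-- Greedy choice of `q` leaves at the root, which together with the root key are independent. -/
lemma exists_independent_star (hc : 1 ≤ c) {M q : ℕ} (hq : 2 ^ q < M + 1) (k₀ : Fin c → A)
    (w : ℕ → Fin c → A) (hw : ∀ j < M, ∀ j' < M, w j = w j' → j = j')
    (hk : ∀ j < M, k₀ ≠ w j) :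
    ∃ S ⊆ Finset.range M, S.card = q ∧
      LinearIndepOn (ZMod 2) keyVec (insert k₀ (w '' (S : Set ℕ))) := by
  have hV : (insert k₀ ((Finset.range M).image w)).card = M + 1 := by
    rw [Finset.card_insert_of_notMem, Finset.card_image_of_injOn, Finset.card_range]
    · intro j hj j' hj' h
      exact hw j (by simpa using hj) j' (by simpa using hj') h
    · intro h
      obtain ⟨j, hj, h⟩ := Finset.mem_image.1 h
      exact hk j (by simpa using hj) h.symm
  have main : ∀ r ≤ q, ∃ S ⊆ Finset.range M, S.card = r ∧
      LinearIndepOn (ZMod 2) keyVec (insert k₀ (w '' (S : Set ℕ))) := by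
    intro r
    induction r with
    | zero =>
      intro _
      refine ⟨∅, by simp, by simp, ?_⟩
      have h0 : keyVec k₀ ≠ 0 := by
        intro h
        have := sum_keyVec k₀ ⟨0, hc⟩
        rw [h] at this
        simp at this
      simpa using LinearIndepOn.singleton (R := ZMod 2) h0
    | succ r ih =>
      intro hr
      obtain ⟨S, hS, hSc, hind⟩ := ih (by omega)
      have hU : (insert k₀ (S.image w)).card ≤ r + 1 :=
        (Finset.card_insert_le _ _).trans (by have := Finset.card_image_le (s := S) (f := w); omega)
      obtain ⟨z, hz, hspan⟩ := exists_not_mem_span (U := insert k₀ (S.image w))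
        (V := insert k₀ ((Finset.range M).image w)) (by
          rw [hV]
          exact (Nat.pow_le_pow_right (by norm_num) (hU.trans hr)).trans_lt hq)
      rw [Finset.coe_insert, Finset.coe_image] at hspan
      have hzU : z ∉ insert k₀ (w '' (S : Set ℕ)) := fun h =>
        hspan (Submodule.subset_span (Set.mem_image_of_mem _ h))
      rcases Finset.mem_insert.1 hz with rfl | hz
      · exact absurd (Set.mem_insert _ _) hzU
      obtain ⟨j, hj, rfl⟩ := Finset.mem_image.1 hz
      have hjS : j ∉ S := fun h => hzU (Or.inr ⟨j, h, rfl⟩)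
      refine ⟨insert j S, Finset.insert_subset hj hS, by
        rw [Finset.card_insert_of_notMem hjS, hSc], ?_⟩
      rw [Finset.coe_insert, Set.image_insert_eq, Set.insert_comm, linearIndepOn_insert hzU]
      exact ⟨hind, hspan⟩
  exact main q le_rfl

/-- Thinning the root star of a configuration to `q` leaves that are independent with the root. -/
lemma Config.select (hc : 1 ≤ c) {X : Finset (Fin c → A)} {p : ℕ → ℕ}
    {T : Fin d → Fin c → A → (Fin b → ZMod 2)} {N M q s : ℕ} {x : ℕ → Fin c → A}
    {y : ℕ → ℕ → Fin c → A} {lab : ℕ → Fin d × Fin d}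
    (C : Config X p T N (fun a => if a = 0 then M else s) x y lab) (hq : 2 ^ q < M + 1) :
    ∃ y', Config X p T N (fun a => if a = 0 then q else s) x y' lab ∧
      LinearIndependent (ZMod 2) fun j => keyVec (slotKeys x y' (0 + 1)
        (trunc (fun a => if a = 0 then q else s) 0 q) j) := by
  obtain ⟨S, hS, hSc, hind⟩ := exists_independent_star hc hq (x 0) (y 0)
    (fun j hj j' hj' h => (C.y_inj 0 (Nat.zero_le _) 0 (Nat.zero_le _) j hj j' hj' h).2)
    (fun j hj => C.xy_ne 0 (Nat.zero_le _) 0 (Nat.zero_le _) j hj)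
  set e := S.orderEmbOfFin hSc with he
  -- renumbering of the leaves; the value `0` is a dummy outside the range of the root star
  set e' : ℕ → ℕ → ℕ := fun a j => if a = 0 then (if h : j < q then e ⟨j, h⟩ else 0) else j
    with he'
  have hlt : ∀ a j, j < (if a = 0 then q else s) → e' a j < if a = 0 then M else s := by
    intro a j hj
    simp only [he']
    by_cases h : a = 0
    · simp only [if_pos h] at hj ⊢
      rw [dif_pos hj]
      exact Finset.mem_range.1 (hS (Finset.orderEmbOfFin_mem S hSc _))
    · simpa only [if_neg h] using hj
  have hinj : ∀ a j j', j < (if a = 0 then q else s) → j' < (if a = 0 then q else s) →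
      e' a j = e' a j' → j = j' := by
    intro a j j' hj hj' h
    simp only [he'] at h
    by_cases h0 : a = 0
    · simp only [if_pos h0] at hj hj' h
      rw [dif_pos hj, dif_pos hj'] at h
      simpa using e.injective h
    · simpa only [if_neg h0] using h
  have C' : Config X p T N (fun a => if a = 0 then q else s) x (fun a j => y a (e' a j)) lab :=
    { x_mem := C.x_mem
      y_mem := fun a ha j hj => C.y_mem a ha _ (hlt a j hj)
      x_inj := C.x_inj
      y_inj := fun a ha a' ha' j hj j' hj' h => by
        obtain ⟨rfl, h2⟩ := C.y_inj a ha a' ha' _ (hlt a j hj) _ (hlt a' j' hj') h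
        exact ⟨rfl, hinj a j j' hj hj' h2⟩
      xy_ne := fun a ha a' ha' j hj => C.xy_ne a ha a' ha' _ (hlt a' j hj)
      x_par := C.x_par
      y_par := fun a ha j hj => C.y_par a ha _ (hlt a j hj) }
  refine ⟨_, C', ?_⟩
  refine (linearIndepOn_range_iff (R := ZMod 2)
    (C'.slotKeys_injective (i := 0) (l := q) (Nat.zero_le _) (by simp)) keyVec).1 ?_
  convert hind using 1
  rw [range_slotKeys]
  ext z
  simp only [Set.mem_insert_iff, Set.mem_ofPred_eq, Set.mem_image, Finset.mem_coe]
  constructor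
  · rintro (⟨a, ha, rfl⟩ | ⟨a, ha, j, hj, rfl⟩)
    · obtain rfl : a = 0 := by omega
      exact Or.inl rfl
    · obtain rfl : a = 0 := by omega
      simp only [trunc, lt_irrefl, if_false] at hj
      right
      refine ⟨_, Finset.orderEmbOfFin_mem S hSc ⟨j, hj⟩, ?_⟩
      simp [he', hj, he]
  · rintro (rfl | ⟨j, hj, rfl⟩)
    · left; exact ⟨0, by omega, rfl⟩
    · right
      have : j ∈ Set.range e := by rw [he, Finset.range_orderEmbOfFin]; exact hj
      obtain ⟨⟨i, hi⟩, rfl⟩ := this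
      exact ⟨0, by omega, i, by simpa [trunc] using hi, by simp [he', hi]⟩

end Selection

/-! ### Summing the probabilities -/

section Assembly

variable {c b d : ℕ} {A : Type*} [Fintype A] [DecidableEq A]

/-- `T` admits a labelled family of distinct keys of `X`, with linearly independent key vectors,
that `T` maps onto the star-decorated tree of shape `(p, n + 1, sz)`. -/
def HasIndependent (p : ℕ → ℕ) (n : ℕ) (sz : ℕ → ℕ) (X : Finset (Fin c → A))
    (T : Fin d → Fin c → A → (Fin b → ZMod 2)) : Prop :=
  ∃ (lab : Fin (n + 1) → Fin d × Fin d) (f : Slots (n + 1) sz → Fin c → A), (∀ j, f j ∈ X) ∧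
    Function.Injective f ∧ (LinearIndependent (ZMod 2) fun j => keyVec (f j)) ∧ Compat p lab f T

/-- As `HasIndependent`, where in addition the span of the key vectors contains the vector of a
further key of `X`. -/
def HasDependent (p : ℕ → ℕ) (n : ℕ) (sz : ℕ → ℕ) (X : Finset (Fin c → A))
    (T : Fin d → Fin c → A → (Fin b → ZMod 2)) : Prop :=
  ∃ (lab : Fin (n + 1) → Fin d × Fin d) (f : Slots (n + 1) sz → Fin c → A), (∀ j, f j ∈ X) ∧
    Function.Injective f ∧ (LinearIndependent (ZMod 2) fun j => keyVec (f j)) ∧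
    (∃ y ∈ X, (∀ j, f j ≠ y) ∧
      keyVec y ∈ Submodule.span (ZMod 2) (Set.range fun j => keyVec (f j))) ∧ Compat p lab f T

/-- Star sizes of the trees being counted: `q` leaf edges at the root, `s` at every other node. -/
def starSize (q s : ℕ) : ℕ → ℕ := fun a => if a = 0 then q else s

/-- The three kinds of events that cover a copy of the tree. The split into root star and later
nodes reflects that the root star is independent from the start. -/
lemma copy_cases [NeZero d] (hd : 2 ≤ d) (hc : 1 ≤ c) {D s q K : ℕ} (hK : D + s + 2 ≤ K)
    (hq : 2 ^ q < K) {X : Finset (Fin c → A)} {T : Fin d → Fin c → A → (Fin b → ZMod 2)}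
    (h : containsCopy (BEdges d K) X
      (fun x => Finset.univ.image fun j : Fin d => (simpleTab (T j) x, j))) :
    HasIndependent (par d) (d ^ D) (trunc (starSize q s) (d ^ D) s) X T ∨
      HasDependent (par d) 0 (trunc (starSize q s) 0 q) X T ∨
      ∃ k < d ^ D, ∃ l < s + 1,
        HasDependent (par d) (k + 1) (trunc (starSize q s) (k + 1) l) X T := by
  obtain ⟨x, y₀, lab, C₀⟩ := exists_config hd hK h
  obtain ⟨y, C, h0⟩ := C₀.select hc (q := q) (by omega)
  change Config X (par d) T (d ^ D) (starSize q s) x y lab at C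
  have hN : d ^ D ≠ 0 := by positivity
  have hs : starSize q s (d ^ D) = s := if_neg hN
  have hcases := C.dichotomy h0
  rcases hcases with h | ⟨i, hi, l, hl, hil, hind, z, hz, hne, hspan⟩
  · left
    rw [hs] at h
    exact ⟨_, _, C.slotKeys_mem le_rfl hs.ge, C.slotKeys_injective le_rfl hs.ge, h,
      C.compat le_rfl hs.ge⟩
  · right
    have hD : HasDependent (par d) i (trunc (starSize q s) i l) X T :=
      ⟨_, _, C.slotKeys_mem hi hl, C.slotKeys_injective hi hl, hind, ⟨z, hz, hne, hspan⟩,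
        C.compat hi hl⟩
    rcases Nat.eq_zero_or_pos i with rfl | hpos
    · left
      obtain rfl : l = q := by simpa [starSize] using hil rfl
      exact hD
    · right
      obtain ⟨k, rfl⟩ : ∃ k, i = k + 1 := ⟨i - 1, by omega⟩
      refine ⟨k, by omega, l, ?_, hD⟩
      have : starSize q s (k + 1) = s := by simp [starSize]
      omega

open Classical in
lemma card_hasIndependent_le (p : ℕ → ℕ) (hp : ∀ a, a ≠ 0 → p a < a) (n : ℕ) (sz : ℕ → ℕ)
    (X : Finset (Fin c → A)) (Λ : ℕ) (hX : X.card ≤ Λ * 2 ^ b) :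
    (Finset.univ.filter fun T : Fin d → Fin c → A → (Fin b → ZMod 2) =>
      HasIndependent p n sz X T).card * ∏ a : Fin (n + 1), (sz a).factorial ≤
    (d * d) ^ (n + 1) * (X.card * Λ ^ (n + ∑ a : Fin (n + 1), sz a)) *
      Fintype.card (Fin d → Fin c → A → (Fin b → ZMod 2)) := by
  convert card_independent_copies (d := d) p hp n sz X Λ hX using 4
  rfl

open Classical in
lemma card_hasDependent_le (hc : 1 ≤ c) (p : ℕ → ℕ) (hp : ∀ a, a ≠ 0 → p a < a) (n : ℕ)
    (sz : ℕ → ℕ) (X : Finset (Fin c → A)) (Λ : ℕ) (hX : X.card ≤ Λ * 2 ^ b) :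
    (Finset.univ.filter fun T : Fin d → Fin c → A → (Fin b → ZMod 2) =>
      HasDependent p n sz X T).card * ∏ a : Fin (n + 1), (sz a).factorial ≤
    (d * d) ^ (n + 1) * (2 * 4 ^ c * (2 * Λ) ^ (n + ∑ a : Fin (n + 1), sz a)) *
      Fintype.card (Fin d → Fin c → A → (Fin b → ZMod 2)) := by
  convert card_dependent_copies (d := d) hc p hp n sz X Λ hX using 4
  rfl

lemma sum_trunc (q s k l : ℕ) :
    ∑ a : Fin (k + 1 + 1), trunc (starSize q s) (k + 1) l a = q + k * s + l := by
  rw [Fin.sum_univ_castSucc, Fin.sum_univ_succ]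
  simp [trunc, starSize]

lemma prod_trunc (q s k l : ℕ) :
    ∏ a : Fin (k + 1 + 1), (trunc (starSize q s) (k + 1) l a).factorial =
      q.factorial * s.factorial ^ k * l.factorial := by
  rw [Fin.prod_univ_castSucc, Fin.prod_univ_succ]
  simp [trunc, starSize]

open Classical in
lemma card_hasDependent_zero (hc : 1 ≤ c) (p : ℕ → ℕ) (hp : ∀ a, a ≠ 0 → p a < a) (q s : ℕ)
    (X : Finset (Fin c → A)) (Λ : ℕ) (hX : X.card ≤ Λ * 2 ^ b) :
    ((Finset.univ.filter fun T : Fin d → Fin c → A → (Fin b → ZMod 2) =>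
      HasDependent p 0 (trunc (starSize q s) 0 q) X T).card : ℝ) ≤
    (d : ℝ) ^ 2 * (2 * 4 ^ c) * ((2 * Λ : ℝ) ^ q / q.factorial) *
      Fintype.card (Fin d → Fin c → A → (Fin b → ZMod 2)) := by
  have h := card_hasDependent_le (d := d) hc p hp 0 (trunc (starSize q s) 0 q) X Λ hX
  have h1 : ∑ a : Fin (0 + 1), trunc (starSize q s) 0 q a = q := by simp [trunc]
  have h2 : ∏ a : Fin (0 + 1), (trunc (starSize q s) 0 q a).factorial = q.factorial := by
    simp [trunc]
  rw [h1, h2] at h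
  have h' := (Nat.cast_le (α := ℝ)).2 h
  push_cast at h'
  have hqf : (0 : ℝ) < q.factorial := by positivity
  rw [← mul_le_mul_iff_left₀ hqf]
  refine h'.trans (le_of_eq ?_)
  field_simp
  ring

open Classical in
lemma card_hasDependent_succ (hc : 1 ≤ c) (p : ℕ → ℕ) (hp : ∀ a, a ≠ 0 → p a < a)
    (q s k l : ℕ) (hl : l ≤ s) (X : Finset (Fin c → A)) (Λ : ℕ) (hΛ : 1 ≤ Λ)
    (hX : X.card ≤ Λ * 2 ^ b) :
    ((Finset.univ.filter fun T : Fin d → Fin c → A → (Fin b → ZMod 2) =>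
      HasDependent p (k + 1) (trunc (starSize q s) (k + 1) l) X T).card : ℝ) ≤
    (d : ℝ) ^ 2 * (2 * 4 ^ c) * ((d : ℝ) ^ 2 * (2 * Λ : ℝ) ^ (1 + s)) *
      ((2 * Λ : ℝ) ^ q / q.factorial) *
      ((d : ℝ) ^ 2 * (2 * Λ : ℝ) ^ (1 + s) / s.factorial) ^ k *
      Fintype.card (Fin d → Fin c → A → (Fin b → ZMod 2)) := by
  have h := card_hasDependent_le (d := d) hc p hp (k + 1) (trunc (starSize q s) (k + 1) l) X Λ hX
  rw [sum_trunc, prod_trunc] at h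
  have h' := (Nat.cast_le (α := ℝ)).2 h
  push_cast at h'
  have hqf : (0 : ℝ) < q.factorial := by positivity
  have hsf : (0 : ℝ) < s.factorial := by positivity
  have hlf : (1 : ℝ) ≤ l.factorial := by exact_mod_cast Nat.factorial_pos l
  have hpos : (0 : ℝ) < q.factorial * s.factorial ^ k := by positivity
  have hβ : (1 : ℝ) ≤ 2 * Λ := by
    have : (1 : ℝ) ≤ Λ := by exact_mod_cast hΛ
    linarith
  rw [← mul_le_mul_iff_left₀ hpos]
  calc _ ≤ _ := le_mul_of_one_le_right (by positivity) hlf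
    _ = _ := by rw [mul_assoc]
    _ ≤ _ := h'
    _ ≤ ((d : ℝ) * d) ^ (k + 1 + 1) * (2 * 4 ^ c * (2 * Λ) ^ (q + (1 + s) * k + (1 + s))) *
        Fintype.card (Fin d → Fin c → A → (Fin b → ZMod 2)) := by
      have he : k + 1 + (q + k * s + l) ≤ q + (1 + s) * k + (1 + s) := by
        have : (1 + s) * k = k + k * s := by ring
        omega
      have := pow_le_pow_right₀ hβ he
      gcongr
    _ = _ := by
      rw [div_pow, pow_add _ _ (1 + s), pow_add _ q, pow_mul _ (1 + s), mul_pow _ _ k]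
      field_simp
      ring

open Classical in
lemma card_hasIndependent (p : ℕ → ℕ) (hp : ∀ a, a ≠ 0 → p a < a)
    (q s N : ℕ) (hN : N ≠ 0) (X : Finset (Fin c → A)) (Λ : ℕ)
    (hX : X.card ≤ Λ * 2 ^ b) :
    ((Finset.univ.filter fun T : Fin d → Fin c → A → (Fin b → ZMod 2) =>
      HasIndependent p N (trunc (starSize q s) N s) X T).card : ℝ) ≤
    (d : ℝ) ^ 2 * X.card * ((2 * Λ : ℝ) ^ q / q.factorial) *
      ((d : ℝ) ^ 2 * (2 * Λ : ℝ) ^ (1 + s) / s.factorial) ^ N *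
      Fintype.card (Fin d → Fin c → A → (Fin b → ZMod 2)) := by
  obtain ⟨k, rfl⟩ : ∃ k, N = k + 1 := ⟨N - 1, by omega⟩
  have h := card_hasIndependent_le (d := d) p hp (k + 1) (trunc (starSize q s) (k + 1) s) X Λ hX
  rw [sum_trunc, prod_trunc] at h
  have h' := (Nat.cast_le (α := ℝ)).2 h
  push_cast at h'
  have hpos : (0 : ℝ) < q.factorial * s.factorial ^ k * s.factorial := by positivity
  rw [← mul_le_mul_iff_left₀ hpos]
  calc _ ≤ _ := h'
    _ = ((d : ℝ) * d) ^ (k + 1 + 1) * (X.card * (Λ : ℝ) ^ (q + (1 + s) * (k + 1))) *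
        Fintype.card (Fin d → Fin c → A → (Fin b → ZMod 2)) := by
      congr 4; ring
    _ ≤ ((d : ℝ) * d) ^ (k + 1 + 1) * (X.card * (2 * Λ : ℝ) ^ (q + (1 + s) * (k + 1))) *
        Fintype.card (Fin d → Fin c → A → (Fin b → ZMod 2)) := by
      gcongr
      have : (0 : ℝ) ≤ Λ := by positivity
      linarith
    _ = _ := by
      rw [div_pow, pow_add _ q, pow_mul _ (1 + s), mul_pow _ _ (k + 1)]
      field_simp
      ring

/-- The union bound over the three kinds of events, with the geometric sum over the length of the
independent prefix carried out. -/
lemma card_copies [NeZero d] (hd : 2 ≤ d) (hc : 1 ≤ c) {D s q K Λ : ℕ} (hK : D + s + 2 ≤ K)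
    (hq : 2 ^ q < K) (X : Finset (Fin c → A)) (hΛ : 1 ≤ Λ) (hX : X.card ≤ Λ * 2 ^ b)
    (hb : 2 ^ b ≤ 2 ^ d ^ D)
    (hε : (d : ℝ) ^ 2 * (2 * Λ : ℝ) ^ (1 + s) / s.factorial ≤ 1 / 2) :
    (Nat.card {T : Fin d → Fin c → A → (Fin b → ZMod 2) // containsCopy (BEdges d K) X
      (fun x => Finset.univ.image fun j : Fin d => (simpleTab (T j) x, j))} : ℝ) ≤
    (d : ℝ) ^ 2 * (Λ + 2 * 4 ^ c * (1 + 2 * (s + 1) * ((d : ℝ) ^ 2 * (2 * Λ : ℝ) ^ (1 + s)))) *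
      ((2 * Λ : ℝ) ^ q / q.factorial) *
      Fintype.card (Fin d → Fin c → A → (Fin b → ZMod 2)) := by
  classical
  set M : ℝ := (d : ℝ) ^ 2 * (2 * Λ : ℝ) ^ (1 + s) with hM
  set Q : ℝ := (2 * Λ : ℝ) ^ q / q.factorial with hQ
  set ε : ℝ := M / s.factorial with hεd
  set tot : ℝ := (Fintype.card (Fin d → Fin c → A → (Fin b → ZMod 2)) : ℝ) with htot
  have hM0 : 0 ≤ M := by positivity
  have hQ0 : 0 ≤ Q := by positivity
  have hε0 : 0 ≤ ε := by positivity
  have htot0 : 0 ≤ tot := by positivity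
  set I := Finset.univ.filter fun T : Fin d → Fin c → A → (Fin b → ZMod 2) =>
    HasIndependent (par d) (d ^ D) (trunc (starSize q s) (d ^ D) s) X T with hI
  set Z := Finset.univ.filter fun T : Fin d → Fin c → A → (Fin b → ZMod 2) =>
    HasDependent (par d) 0 (trunc (starSize q s) 0 q) X T with hZ
  set W : ℕ → ℕ → Finset (Fin d → Fin c → A → (Fin b → ZMod 2)) := fun k l =>
    Finset.univ.filter fun T : Fin d → Fin c → A → (Fin b → ZMod 2) =>
      HasDependent (par d) (k + 1) (trunc (starSize q s) (k + 1) l) X T with hW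
  have hsub : (Finset.univ.filter fun T : Fin d → Fin c → A → (Fin b → ZMod 2) =>
      containsCopy (BEdges d K) X
        (fun x => Finset.univ.image fun j : Fin d => (simpleTab (T j) x, j))) ⊆
      I ∪ (Z ∪ (Finset.range (d ^ D)).biUnion fun k => (Finset.range (s + 1)).biUnion (W k)) := by
    intro T hT
    have := copy_cases hd hc hK hq (Finset.mem_filter.1 hT).2
    simpa [hI, hZ, hW, -Order.lt_add_one_iff] using this
  have hcard := (Finset.card_le_card hsub).trans ((Finset.card_union_le _ _).trans
    (Nat.add_le_add_left ((Finset.card_union_le _ _).trans (Nat.add_le_add_left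
      (Finset.card_biUnion_le.trans
        (Finset.sum_le_sum fun k _ => Finset.card_biUnion_le)) _)) _))
  rw [Nat.card_eq_fintype_card, Fintype.card_subtype]
  refine (Nat.cast_le.2 hcard).trans ?_
  push_cast
  have hp := par_lt hd
  have hN : d ^ D ≠ 0 := by positivity
  have h1 : (I.card : ℝ) ≤ (d : ℝ) ^ 2 * Λ * Q * tot := by
    refine (card_hasIndependent (par d) hp q s (d ^ D) hN X Λ hX).trans ?_
    rw [← hM, ← hεd, ← hQ, ← htot]
    -- the `Λ * 2 ^ b` choices of the root key are absorbed by `ε ^ N ≤ 2 ^ (-N) ≤ 2 ^ (-b)`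
    have hm : (X.card : ℝ) * ε ^ d ^ D ≤ Λ := by
      calc (X.card : ℝ) * ε ^ d ^ D ≤ (Λ * 2 ^ b : ℝ) * (1 / 2) ^ d ^ D := by
            gcongr
            exact_mod_cast hX
        _ ≤ (Λ * 2 ^ d ^ D : ℝ) * (1 / 2) ^ d ^ D := by
            gcongr ?_ * _
            gcongr ?_ * ?_
            exact_mod_cast hb
        _ = Λ := by rw [mul_assoc, ← mul_pow]; norm_num
    calc _ = (d : ℝ) ^ 2 * Q * tot * (X.card * ε ^ d ^ D) := by ring
      _ ≤ (d : ℝ) ^ 2 * Q * tot * Λ := by gcongr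
      _ = _ := by ring
  have h2 : (Z.card : ℝ) ≤ (d : ℝ) ^ 2 * (2 * 4 ^ c) * Q * tot :=
    card_hasDependent_zero hc (par d) hp q s X Λ hX
  have h3 : ∑ k ∈ Finset.range (d ^ D), ∑ l ∈ Finset.range (s + 1), ((W k l).card : ℝ) ≤
      (d : ℝ) ^ 2 * (2 * 4 ^ c) * M * Q * tot * (s + 1) * 2 := by
    calc _ ≤ ∑ k ∈ Finset.range (d ^ D), ∑ _l ∈ Finset.range (s + 1),
          (d : ℝ) ^ 2 * (2 * 4 ^ c) * M * Q * (1 / 2) ^ k * tot := by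
          refine Finset.sum_le_sum fun k _ => Finset.sum_le_sum fun l hl => ?_
          refine (card_hasDependent_succ hc (par d) hp q s k l
            (Nat.lt_succ_iff.1 (Finset.mem_range.1 hl)) X Λ hΛ hX).trans ?_
          rw [← hM, ← hεd, ← hQ, ← htot]
          gcongr
      _ = (d : ℝ) ^ 2 * (2 * 4 ^ c) * M * Q * tot * (s + 1) *
          ∑ k ∈ Finset.range (d ^ D), (1 / 2 : ℝ) ^ k := by
          rw [Finset.mul_sum]
          refine Finset.sum_congr rfl fun k _ => ?_
          rw [Finset.sum_const, Finset.card_range, nsmul_eq_mul]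
          push_cast
          ring
      _ ≤ _ := by
          gcongr
          exact sum_geometric_two_le _
  refine (add_le_add h1 (add_le_add h2 h3)).trans (le_of_eq ?_)
  ring

end Assembly

/-- A star size `s` for which each further node multiplies the expected count by at most `1 / 2`. -/
lemma exists_star_size (d Λ : ℕ) :
    ∃ s : ℕ, (d : ℝ) ^ 2 * (2 * Λ : ℝ) ^ (1 + s) / s.factorial ≤ 1 / 2 := by
  have h := (FloorSemiring.tendsto_pow_div_factorial_atTop (2 * Λ : ℝ)).const_mul
    ((d : ℝ) ^ 2 * (2 * Λ))
  rw [mul_zero] at h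
  obtain ⟨s, hs⟩ := (h.eventually_lt_const (show (0 : ℝ) < 1 / 2 by norm_num)).exists
  refine ⟨s, le_trans (le_of_eq ?_) hs.le⟩
  rw [pow_add]
  ring

/-- `2 ^ q` is at least half of the tree height, which beats the exponential series. -/
lemma pow_div_factorial_log_le {β : ℝ} (hβ : 0 ≤ β) {K : ℕ} (hK : 2 ≤ K) :
    β ^ Nat.log 2 (K - 1) / (Nat.log 2 (K - 1)).factorial ≤ Real.exp (2 * β) * 2 / K := by
  set q := Nat.log 2 (K - 1) with hq
  have h1 := Real.pow_div_factorial_le_exp (2 * β) (by positivity) q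
  have h2 : K ≤ 2 ^ (q + 1) := by
    have := Nat.lt_pow_succ_log_self (b := 2) (by norm_num) (K - 1)
    rw [← hq, Nat.succ_eq_add_one] at this
    omega
  have h3 : (K : ℝ) ≤ 2 ^ (q + 1) := by exact_mod_cast h2
  have hK0 : (0 : ℝ) < K := by exact_mod_cast (by omega : 0 < K)
  have hf : (0 : ℝ) ≤ β ^ q / q.factorial := by positivity
  rw [le_div_iff₀ hK0]
  calc β ^ q / q.factorial * K ≤ β ^ q / q.factorial * 2 ^ (q + 1) := by gcongr
    _ = (2 * β) ^ q / q.factorial * 2 := by rw [mul_pow, pow_succ]; ring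
    _ ≤ Real.exp (2 * β) * 2 := by gcongr

theorem stmt6 (d c : ℕ) (hd : 2 ≤ d) (hc : 1 ≤ c) (C : ℝ) (hC : 0 < C) :
    haveI : NeZero d := ⟨by omega⟩
    ∃ r K : ℝ, ∀ b : ℕ, 1 ≤ b → ∀ (A : Type) [Fintype A] [DecidableEq A],
      ∀ X : Finset (Fin c → A),
        4 ≤ d * 2 ^ b → (X.card : ℝ) ≤ C * ((d : ℝ) * 2 ^ b) →
        (Nat.card {T : Fin d → Fin c → A → (Fin b → ZMod 2) //
            containsCopy
              (BEdges d ⌈Real.logb 2 (Real.logb 2 ((d : ℝ) * 2 ^ b)) / Real.logb 2 d + r⌉₊)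
              X (fun x => Finset.univ.image fun j : Fin d => (simpleTab (T j) x, j))} : ℝ) /
          (Fintype.card (Fin d → Fin c → A → (Fin b → ZMod 2)) : ℝ) ≤
        K / Real.logb 2 (Real.logb 2 ((d : ℝ) * 2 ^ b)) := by
  have : NeZero d := ⟨by omega⟩
  set Λ : ℕ := ⌈C * d⌉₊ + 1 with hΛ
  obtain ⟨s, hs⟩ := exists_star_size d Λ
  set M : ℝ := (d : ℝ) ^ 2 * (Λ + 2 * 4 ^ c * (1 + 2 * (s + 1) *
    ((d : ℝ) ^ 2 * (2 * Λ : ℝ) ^ (1 + s)))) with hM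
  have hM0 : 0 ≤ M := by positivity
  have hd1 : (1 : ℝ) < d := by exact_mod_cast (by omega : 1 < d)
  have hlogd : 0 < Real.logb 2 d := Real.logb_pos (by norm_num) hd1
  refine ⟨((s + 2 : ℕ) : ℝ), M * (Real.exp (2 * (2 * Λ)) * 2) * Real.logb 2 d, ?_⟩
  intro b hb A _ _ X hn hX
  set n : ℝ := (d : ℝ) * 2 ^ b with hnd
  have hn4 : (4 : ℝ) ≤ n := by rw [hnd]; exact_mod_cast hn
  have hn0 : 0 < n := by linarith
  have hlog : 2 ≤ Real.logb 2 n := by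
    rw [Real.le_logb_iff_rpow_le (by norm_num) hn0]
    norm_num
    exact hn4
  have hlog0 : 0 < Real.logb 2 n := by linarith
  set L : ℝ := Real.logb 2 (Real.logb 2 n) with hL
  have hL1 : 1 ≤ L := by
    rw [hL, Real.le_logb_iff_rpow_le (by norm_num) hlog0]
    simpa using hlog
  set D : ℕ := ⌈L / Real.logb 2 d⌉₊ with hD
  have hLd : 0 ≤ L / Real.logb 2 d := by positivity
  have hDle : L / Real.logb 2 d ≤ D := Nat.le_ceil _
  have hKeq : ⌈L / Real.logb 2 d + ((s + 2 : ℕ) : ℝ)⌉₊ = D + s + 2 := by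
    rw [Nat.ceil_add_natCast hLd, ← hD, add_assoc]
  rw [hKeq]
  have hXn : X.card ≤ Λ * 2 ^ b := by
    have h1 : C * d ≤ Λ := by
      rw [hΛ]; push_cast
      exact (Nat.le_ceil _).trans (by linarith)
    have h2 : (X.card : ℝ) ≤ Λ * 2 ^ b := by
      refine hX.trans ?_
      rw [hnd, ← mul_assoc]
      gcongr
    exact_mod_cast h2
  -- `d ^ D ≥ 2 ^ L = log₂ n`, so a tree with `d ^ D` nodes beats the union bound over root keys
  have hND : Real.logb 2 n ≤ (d : ℝ) ^ D := by
    have h1 : L ≤ D * Real.logb 2 d := (div_le_iff₀ hlogd).1 hDle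
    have h2 : D * Real.logb 2 d = Real.logb 2 ((d : ℝ) ^ D) := by rw [Real.logb_pow]
    rw [h2] at h1
    exact (Real.logb_le_logb (by norm_num) hlog0 (by positivity)).1 h1
  have hbN : 2 ^ b ≤ 2 ^ d ^ D := by
    have h1 : n ≤ (2 : ℝ) ^ d ^ D := by
      rw [Real.logb_le_iff_le_rpow (by norm_num) hn0] at hND
      exact_mod_cast hND
    have h2 : (2 : ℝ) ^ b ≤ n := le_mul_of_one_le_left (by positivity) hd1.le
    exact_mod_cast h2.trans h1
  set q : ℕ := Nat.log 2 (D + s + 2 - 1) with hq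
  have hqK : 2 ^ q < D + s + 2 := by
    have := Nat.pow_log_le_self 2 (x := D + s + 2 - 1) (by omega)
    rw [← hq] at this
    omega
  have hmain := card_copies hd hc (K := D + s + 2) le_rfl hqK X (by omega) hXn hbN hs
  have hQ := pow_div_factorial_log_le (β := 2 * (Λ : ℝ)) (by positivity) (K := D + s + 2)
    (by omega)
  rw [← hq] at hQ
  have htot : (0 : ℝ) < Fintype.card (Fin d → Fin c → A → (Fin b → ZMod 2)) := by
    exact_mod_cast Fintype.card_pos
  rw [div_le_iff₀ htot]
  refine hmain.trans ?_
  rw [← hM]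
  gcongr ?_ * _
  have hK : L / Real.logb 2 d ≤ ((D + s + 2 : ℕ) : ℝ) := by
    push_cast
    have : (0 : ℝ) ≤ s := by positivity
    linarith
  have hL0 : 0 < L := by linarith
  calc M * ((2 * (Λ : ℝ)) ^ q / q.factorial)
      ≤ M * (Real.exp (2 * (2 * Λ)) * 2 / ((D + s + 2 : ℕ) : ℝ)) := by gcongr
    _ ≤ M * (Real.exp (2 * (2 * Λ)) * 2 / (L / Real.logb 2 d)) := by gcongr
    _ = _ := by field_simp
end

section
/- For every integer d ≥ 2 there is a unique positive real number x satisfying x^d = x^{d−1} + x^{d−2} + ⋯ + x + 1; denoting this number by φ_d, one has φ_d = lim_{k→∞} F_d(k)^{1/k}, where F_d denotes the d-ary Fibonacci numbers. -/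
/-!
Dividing the equation `x ^ d = ∑ i < d, x ^ i` by `x ^ d` gives `1 = ∑ i < d, x ^ (i - d)`, whose
right-hand side is strictly decreasing in `x > 0`; this gives uniqueness (`root_not_lt`). Existence
is the intermediate value theorem on `[1, 2]`.

For a positive root `φ`, the sequence `φ ^ k` satisfies the same recurrence as `dFib d`. Comparing
the two by strong induction gives `φ ^ k / φ ^ d ≤ dFib d k ≤ φ ^ k` for `k ≥ 1`
(`le_mul_dFib`, `dFib_le`), and taking `k`-th roots squeezes the limit to `φ`, since
`(φ ^ d)⁻¹ ^ (1 / k) → 1`.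
-/

/-- d-ary Fibonacci numbers: `dFib d k = F_d(k)`, with `F_d(j) = 0` for `j ≤ 0`. -/
def dFib (d : ℕ) : ℕ → ℕ
  | 0 => 0
  | 1 => 1
  | (k + 2) => ∑ j ∈ Finset.range d, dFib d (k + 1 - j)
  termination_by k => k
  decreasing_by omega

lemma root_not_lt {d : ℕ} (hd : 2 ≤ d) {x y : ℝ} (hx : 0 < x)
    (hxr : x ^ d = ∑ i ∈ Finset.range d, x ^ i) (hyr : y ^ d = ∑ i ∈ Finset.range d, y ^ i) :
    ¬ x < y := by
  intro hxy
  have hy : 0 < y := hx.trans hxy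
  have key : ∑ i ∈ Finset.range d, x ^ d * y ^ i < ∑ i ∈ Finset.range d, y ^ d * x ^ i := by
    apply Finset.sum_lt_sum_of_nonempty ⟨0, Finset.mem_range.2 (by omega)⟩
    intro i hi
    have hi := Finset.mem_range.1 hi
    obtain ⟨m, rfl⟩ := Nat.exists_eq_add_of_lt hi
    have h1 : x ^ (m + 1) < y ^ (m + 1) := pow_lt_pow_left₀ hxy hx.le (by omega)
    have h2 : 0 < x ^ i * y ^ i := by positivity
    calc x ^ (i + m + 1) * y ^ i = (x ^ i * y ^ i) * x ^ (m + 1) := by ring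
      _ < (x ^ i * y ^ i) * y ^ (m + 1) := by gcongr
      _ = _ := by ring
  rw [← Finset.mul_sum, ← Finset.mul_sum, ← hxr, ← hyr, mul_comm] at key
  exact lt_irrefl _ key

lemma exists_root {d : ℕ} (hd : 2 ≤ d) :
    ∃ x : ℝ, 0 < x ∧ x ^ d = ∑ i ∈ Finset.range d, x ^ i := by
  have hc : ContinuousOn (fun x : ℝ => x ^ d - ∑ i ∈ Finset.range d, x ^ i) (Set.Icc 1 2) := by
    fun_prop
  have h2 : (2 : ℝ) ^ d - ∑ i ∈ Finset.range d, (2 : ℝ) ^ i = 1 := by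
    rw [geom_sum_eq (by norm_num)]
    ring
  have hd' : (2 : ℝ) ≤ d := by exact_mod_cast hd
  obtain ⟨x, hx, h⟩ := intermediate_value_Icc (by norm_num : (1 : ℝ) ≤ 2) hc
    (show (0 : ℝ) ∈ Set.Icc _ _ by
      constructor
      · simp only [one_pow, Finset.sum_const, Finset.card_range, nsmul_eq_mul, mul_one]
        linarith
      · simp only [h2]
        norm_num)
  exact ⟨x, by linarith [hx.1], sub_eq_zero.1 h⟩

lemma one_lt_root {d : ℕ} (hd : 2 ≤ d) {φ : ℝ} (h0 : 0 < φ)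
    (hφ : φ ^ d = ∑ i ∈ Finset.range d, φ ^ i) : 1 < φ := by
  by_contra! h
  obtain ⟨n, rfl⟩ := Nat.exists_eq_add_of_le' hd
  -- The terms `i = 0` and `i = n + 1` already exceed `φ ^ (n + 2)` when `φ ≤ 1`.
  rw [Finset.sum_range_succ, Finset.sum_range_succ'] at hφ
  have h1 : 0 ≤ ∑ k ∈ Finset.range n, φ ^ (k + 1) := Finset.sum_nonneg fun i _ => by positivity
  have h2 : φ ^ (n + 2) ≤ 1 := pow_le_one₀ h0.le h
  have h3 : 0 < φ ^ (n + 1) := by positivity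
  rw [pow_zero] at hφ
  linarith

lemma dFib_succ_succ (d k : ℕ) :
    dFib d (k + 2) = ∑ j ∈ Finset.range d, dFib d (k + 1 - j) := by
  rw [dFib]

lemma dFib_pos {d : ℕ} (hd : 2 ≤ d) (k : ℕ) : 0 < dFib d (k + 1) := by
  induction k with
  | zero => simp [dFib]
  | succ k ih =>
    rw [dFib_succ_succ]
    exact ih.trans_le (Finset.single_le_sum (f := fun j => dFib d (k + 1 - j))
      (fun _ _ => Nat.zero_le _) (Finset.mem_range.2 (by omega : 0 < d)))

/-- The recurrence satisfied by the powers of a root, scaled by `φ ^ d` so that no exponent is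
negative. -/
lemma sum_pow_reflect {d : ℕ} {φ : ℝ} (hφ : φ ^ d = ∑ i ∈ Finset.range d, φ ^ i) (k : ℕ) :
    ∑ j ∈ Finset.range d, φ ^ k * φ ^ (d - 1 - j) = φ ^ d * φ ^ k := by
  rw [← Finset.mul_sum, Finset.sum_range_reflect (fun i => φ ^ i) d, ← hφ, mul_comm]

lemma dFib_le {d : ℕ} (hd : 2 ≤ d) {φ : ℝ} (h0 : 0 < φ)
    (hφ : φ ^ d = ∑ i ∈ Finset.range d, φ ^ i) (k : ℕ) : (dFib d k : ℝ) ≤ φ ^ k := by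
  induction k using Nat.strong_induction_on with
  | _ k ih =>
    match k, ih with
    | 0, _ => simp [dFib]
    | 1, _ => simpa [dFib] using (one_lt_root hd h0 hφ).le
    | k + 2, ih =>
      refine le_of_mul_le_mul_left ?_ (pow_pos h0 d)
      rw [← sum_pow_reflect hφ, dFib_succ_succ, Nat.cast_sum, Finset.mul_sum]
      refine Finset.sum_le_sum fun j hj => ?_
      have hj := Finset.mem_range.1 hj
      by_cases hjk : j ≤ k + 1
      · calc φ ^ d * (dFib d (k + 1 - j) : ℝ) ≤ φ ^ d * φ ^ (k + 1 - j) := by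
              gcongr
              exact ih _ (by omega)
          _ = φ ^ (k + 2) * φ ^ (d - 1 - j) := by
              rw [← pow_add, ← pow_add]
              congr 1
              omega
      · -- Here the index `k + 1 - j` truncates to `0`, where `dFib` vanishes.
        rw [Nat.sub_eq_zero_of_le (by omega)]
        simp only [dFib, Nat.cast_zero, mul_zero]
        positivity

lemma le_mul_dFib {d : ℕ} (hd : 2 ≤ d) {φ : ℝ} (h0 : 0 < φ)
    (hφ : φ ^ d = ∑ i ∈ Finset.range d, φ ^ i) (k : ℕ) (hk : 1 ≤ k) :
    φ ^ k ≤ φ ^ d * dFib d k := by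
  have h1 := one_lt_root hd h0 hφ
  induction k using Nat.strong_induction_on with
  | _ k ih =>
    by_cases hkd : k ≤ d
    · have hp : (1 : ℝ) ≤ dFib d k := by
        obtain ⟨m, rfl⟩ := Nat.exists_eq_add_of_le' hk
        exact_mod_cast dFib_pos hd m
      calc φ ^ k ≤ φ ^ d := pow_le_pow_right₀ h1.le hkd
        _ ≤ φ ^ d * dFib d k := le_mul_of_one_le_right (by positivity) hp
    · obtain ⟨m, rfl⟩ := Nat.exists_eq_add_of_le' (show 2 ≤ k by omega)
      refine le_of_mul_le_mul_left ?_ (pow_pos h0 d)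
      rw [← sum_pow_reflect hφ, dFib_succ_succ, Nat.cast_sum, Finset.mul_sum, Finset.mul_sum]
      refine Finset.sum_le_sum fun j hj => ?_
      have hj := Finset.mem_range.1 hj
      calc φ ^ (m + 2) * φ ^ (d - 1 - j) = φ ^ d * φ ^ (m + 1 - j) := by
              rw [← pow_add, ← pow_add]
              congr 1
              omega
        _ ≤ _ := by
              gcongr
              exact ih _ (by omega) (by omega)

theorem stmt18 (d : ℕ) (hd : 2 ≤ d) :
    (∃! x : ℝ, 0 < x ∧ x ^ d = ∑ i ∈ Finset.range d, x ^ i) ∧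
      ∀ φ : ℝ, (0 < φ ∧ φ ^ d = ∑ i ∈ Finset.range d, φ ^ i) →
        Filter.Tendsto (fun k : ℕ => (dFib d k : ℝ) ^ ((k : ℝ)⁻¹))
          Filter.atTop (nhds φ) := by
  constructor
  · obtain ⟨x, hx, hxr⟩ := exists_root hd
    exact ⟨x, ⟨hx, hxr⟩, fun y ⟨hy, hyr⟩ =>
      le_antisymm (not_lt.1 (root_not_lt hd hx hxr hyr)) (not_lt.1 (root_not_lt hd hy hyr hxr))⟩
  · rintro φ ⟨h0, hφ⟩
    have hc : 0 < (φ ^ d)⁻¹ := by positivity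
    have hinv : Filter.Tendsto (fun k : ℕ => ((k : ℝ)⁻¹)) Filter.atTop (nhds 0) :=
      tendsto_inv_atTop_nhds_zero_nat
    have hlow : Filter.Tendsto (fun k : ℕ => ((φ ^ d)⁻¹) ^ ((k : ℝ)⁻¹) * φ)
        Filter.atTop (nhds φ) := by
      simpa using (tendsto_const_nhds.rpow hinv (Or.inl hc.ne')).mul_const φ
    refine tendsto_of_tendsto_of_tendsto_of_le_of_le' hlow tendsto_const_nhds ?_ ?_
    · filter_upwards [Filter.eventually_ge_atTop 1] with k hk
      calc ((φ ^ d)⁻¹) ^ ((k : ℝ)⁻¹) * φ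
          = ((φ ^ d)⁻¹) ^ ((k : ℝ)⁻¹) * (φ ^ k) ^ ((k : ℝ)⁻¹) := by
            rw [Real.pow_rpow_inv_natCast h0.le (by omega)]
        _ = ((φ ^ d)⁻¹ * φ ^ k) ^ ((k : ℝ)⁻¹) :=
            (Real.mul_rpow hc.le (by positivity)).symm
        _ ≤ (dFib d k : ℝ) ^ ((k : ℝ)⁻¹) := by
            refine Real.rpow_le_rpow (by positivity) ?_ (by positivity)
            rw [inv_mul_le_iff₀ (by positivity)]
            exact le_mul_dFib hd h0 hφ k hk
    · filter_upwards [Filter.eventually_ge_atTop 1] with k hk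
      calc (dFib d k : ℝ) ^ ((k : ℝ)⁻¹) ≤ (φ ^ k) ^ ((k : ℝ)⁻¹) :=
            Real.rpow_le_rpow (by positivity) (dFib_le hd h0 hφ k) (by positivity)
        _ = φ := Real.pow_rpow_inv_natCast h0.le (by omega)
end
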